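/- arXiv:0908.0107 — 4 statements merged into one kernel-verified Lean document; each statement's English description precedes it below -/
import Mathlib

section
/- Let R be a commutative Noetherian local ring and M a finitely generated R-module. Let x_1, ..., x_n be a sequence that is both an R-sequence and an M-sequence, contained in the intersection of the annihilators of Ext^i_R(M, Ω^j M) for all 1 ≤ i, j ≤ n. Then Ω^n_R(M/(x_1,...,x_n)M) is isomorphic to the direct sum over i = 0, ..., n of (Ω^i M)^(binomial(n,i)). -/
open CategoryTheory IsLocalRing

noncomputable section

variable (R : Type) [CommRing R] [IsLocalRing R]

/-- `K` is (isomorphic to) the first syzygy of `M`, i.e. the kernel of a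
minimal free cover of `M`. -/
def IsSyzygyOf (K M : ModuleCat.{0} R) : Prop :=
  ∃ (n : ℕ) (f : (Fin n → R) →ₗ[R] M),
    Function.Surjective f ∧
    LinearMap.ker f ≤ (maximalIdeal R) • (⊤ : Submodule R (Fin n → R)) ∧
    Nonempty (K ≃ₗ[R] LinearMap.ker f)

/-- `K` is (isomorphic to) the `n`-th syzygy of `M` with respect to a minimal
free resolution. -/
def IsNthSyzygyOf : ℕ → ModuleCat.{0} R → ModuleCat.{0} R → Prop
  | 0, K, M => Nonempty (K ≃ₗ[R] M)
  | n + 1, K, M => ∃ K' : ModuleCat.{0} R, IsSyzygyOf R K' M ∧ IsNthSyzygyOf n K K'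

section ExtPart
variable (R : Type) [CommRing R]
lemma ext_kill (M W : ModuleCat.{0} R) (P : ProjectiveResolution M) (k : ℕ) (x : R)
    (h : ∀ e : ((Ext R (ModuleCat.{0} R) (k+1)).obj (Opposite.op M)).obj W, x • e = 0)
    (c : P.complex.X (k+1) ⟶ W) (hc : P.complex.d (k+2) (k+1) ≫ c = 0) :
    ∃ g : P.complex.X k ⟶ W, P.complex.d (k+1) k ≫ g = x • c := by
  let C := P.complex.linearYonedaObj R W
  let S := C.sc' k (k+1) (k+2)
  let i0 : C.homology (k+1) ≅ S.homology :=
    ShortComplex.homologyMapIso (C.isoSc' k (k+1) (k+2) (by simp) (by simp))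
  let i1 := P.isoExt (R := R) (k+1) W ≪≫ i0 ≪≫ S.moduleCatHomologyIso
  let i2 := i1.toLinearEquiv
  have h2 : ∀ e : S.moduleCatLeftHomologyData.H, x • e = 0 := by
    intro e
    have := congrArg i2 (h (i2.symm e))
    rw [map_smul, LinearEquiv.apply_symm_apply, map_zero] at this
    exact this
  have hz : c ∈ LinearMap.ker S.g.hom := hc
  have h3 : (Submodule.Quotient.mk (x • ⟨c, hz⟩) :
    LinearMap.ker S.g.hom ⧸ LinearMap.range S.moduleCatToCycles) = 0 := h2 (Submodule.Quotient.mk ⟨c, hz⟩)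
  rw [Submodule.Quotient.mk_eq_zero] at h3
  obtain ⟨g, hg⟩ := h3
  exact ⟨g, congrArg Subtype.val hg⟩

def resA (M : ModuleCat.{0} R) (P : ProjectiveResolution M) : ℕ → ModuleCat.{0} R
  | 0 => M
  | j+1 => ModuleCat.of R (LinearMap.range (P.complex.d (j+1) j).hom)

def resQ (M : ModuleCat.{0} R) (P : ProjectiveResolution M) :
    ∀ j, P.complex.X j →ₗ[R] resA R M P j
  | 0 => (P.π.f 0).hom
  | j+1 => (P.complex.d (j+1) j).hom.rangeRestrict

def resI (M : ModuleCat.{0} R) (P : ProjectiveResolution M) (j : ℕ) :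
    resA R M P (j+1) →ₗ[R] P.complex.X j := (LinearMap.range (P.complex.d (j+1) j).hom).subtype

lemma resQ_surj (M : ModuleCat.{0} R) (P : ProjectiveResolution M) (j : ℕ) :
    Function.Surjective (resQ R M P j) := by
  cases j with
  | zero => exact (ModuleCat.epi_iff_surjective (P.π.f 0)).1 inferInstance
  | succ j => exact LinearMap.surjective_rangeRestrict _

lemma resI_inj (M : ModuleCat.{0} R) (P : ProjectiveResolution M) (j : ℕ) :
    Function.Injective (resI R M P j) := Subtype.val_injective

lemma res_exact (M : ModuleCat.{0} R) (P : ProjectiveResolution M) (j : ℕ) :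
    Function.Exact (resI R M P j) (resQ R M P j) := by
  rw [LinearMap.exact_iff]
  have h1 : LinearMap.range (resI R M P j) = LinearMap.range (P.complex.d (j+1) j).hom :=
    Submodule.range_subtype _
  rw [h1]
  cases j with
  | zero => exact ((ShortComplex.moduleCat_exact_iff_range_eq_ker _).1 P.exact₀).symm
  | succ j =>
    have h2 : LinearMap.ker (resQ R M P (j+1)) = LinearMap.ker (P.complex.d (j+1) j).hom :=
      LinearMap.ker_rangeRestrict _
    rw [h2]
    exact ((ShortComplex.moduleCat_exact_iff_range_eq_ker _).1 (P.exact_succ j)).symm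

lemma res_kill (M W : ModuleCat.{0} R) (P : ProjectiveResolution M) (k : ℕ) (x : R)
    (h : ∀ e : ((Ext R (ModuleCat.{0} R) (k+1)).obj (Opposite.op M)).obj W, x • e = 0)
    (c : resA R M P (k+1) →ₗ[R] W) : ∃ g : P.complex.X k →ₗ[R] W, g ∘ₗ resI R M P k = x • c := by
  obtain ⟨g, hg⟩ := ext_kill R M W P k x h (ModuleCat.ofHom (c ∘ₗ resQ R M P (k+1))) (by
    ext z
    have : resQ R M P (k+1) ((P.complex.d (k+2) (k+1)).hom z) = 0 :=
      (res_exact R M P (k+1) _).2 ⟨resQ R M P (k+2) z, rfl⟩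
    change c (resQ R M P (k+1) ((P.complex.d (k+2) (k+1)).hom z)) = 0
    rw [this, map_zero])
  refine ⟨g.hom, ?_⟩
  ext z
  obtain ⟨y, rfl⟩ := resQ_surj R M P (k+1) z
  exact congrArg (fun t => t.hom y) hg

lemma res_proj (M : ModuleCat.{0} R) (P : ProjectiveResolution M) (j : ℕ) :
    Module.Projective R (P.complex.X j) :=
  (IsProjective.iff_projective (P.complex.X j)).2 (P.projective j)

end ExtPart

section
variable (R : Type) [CommRing R]
/-- `A` is a stable retract of `B`. -/
def StRet (A B : Type) [AddCommGroup A] [Module R A] [AddCommGroup B] [Module R B] : Prop :=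
  ∃ (G : ModuleCat.{0} R) (_ : Module.Projective R G) (u : A →ₗ[R] B) (v : B →ₗ[R] A)
    (a : A →ₗ[R] G) (b : G →ₗ[R] A), ∀ z, v (u z) = z + b (a z)

section StRetSec
variable {R : Type} [CommRing R]
variable {A B P Q K L W : Type} [AddCommGroup A] [Module R A] [AddCommGroup B] [Module R B]
  [AddCommGroup P] [Module R P] [AddCommGroup Q] [Module R Q] [AddCommGroup K] [Module R K]
  [AddCommGroup L] [Module R L] [AddCommGroup W] [Module R W]

/-- factor a map through a kernel -/
lemma exists_factor {i : K →ₗ[R] P} {p : P →ₗ[R] A} (hi : Function.Injective i)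
    (he : Function.Exact i p) (f : W →ₗ[R] P) (hf : ∀ w, p (f w) = 0) :
    ∃ g : W →ₗ[R] K, ∀ w, i (g w) = f w := by
  let e := LinearEquiv.ofInjective i hi
  refine ⟨e.symm.toLinearMap ∘ₗ f.codRestrict (LinearMap.range i) (fun w => (he _).1 (hf w)), ?_⟩
  intro w
  have : ∀ y, i (e.symm y) = y := fun y => congrArg Subtype.val (e.apply_symm_apply y)
  exact this _

/-- core: the lifted data on the covers -/
lemma StRet.core [Module.Projective R P] [Module.Projective R Q]
    (h : StRet R A B) {p : P →ₗ[R] A} {q : Q →ₗ[R] B} {i : K →ₗ[R] P} {j : L →ₗ[R] Q}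
    (hp : Function.Surjective p) (hq : Function.Surjective q)
    (hi : Function.Injective i) (hj : Function.Injective j)
    (hip : Function.Exact i p) (hjq : Function.Exact j q) :
    ∃ (U : P →ₗ[R] Q) (u : K →ₗ[R] L) (v : L →ₗ[R] K) (c : P →ₗ[R] K),
      (∀ z, U (i z) = j (u z)) ∧ ∀ z, v (u z) = z + c (i z) := by
  obtain ⟨G, hG, u, v, a, b, huv⟩ := h
  obtain ⟨U, hU⟩ := Module.projective_lifting_property q (u ∘ₗ p) hq
  obtain ⟨V, hV⟩ := Module.projective_lifting_property p (v ∘ₗ q) hp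
  obtain ⟨b', hb'⟩ := Module.projective_lifting_property p b hp
  replace hU : ∀ z, q (U z) = u (p z) := fun z => congrArg (fun t => t z) hU
  replace hV : ∀ z, p (V z) = v (q z) := fun z => congrArg (fun t => t z) hV
  replace hb' : ∀ z, p (b' z) = b z := fun z => congrArg (fun t => t z) hb'
  have hpi : ∀ z, p (i z) = 0 := fun z => (hip _).2 ⟨z, rfl⟩
  have hqj : ∀ z, q (j z) = 0 := fun z => (hjq _).2 ⟨z, rfl⟩
  obtain ⟨u', hu'⟩ := exists_factor hj hjq (U ∘ₗ i) (by simp [hU, hpi])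
  obtain ⟨v', hv'⟩ := exists_factor hi hip (V ∘ₗ j) (by simp [hV, hqj])
  obtain ⟨c, hc⟩ := exists_factor hi hip (V ∘ₗ U - LinearMap.id - b' ∘ₗ a ∘ₗ p) (by
    simp [hV, hU, hb', huv])
  refine ⟨U, u', v', c, fun z => (hu' z).symm, fun z => hi ?_⟩
  simp [hv', hu', hc, hpi]

lemma StRet.ker [Module.Projective R P] [Module.Projective R Q]
    (h : StRet R A B) {p : P →ₗ[R] A} {q : Q →ₗ[R] B} {i : K →ₗ[R] P} {j : L →ₗ[R] Q}
    (hp : Function.Surjective p) (hq : Function.Surjective q)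
    (hi : Function.Injective i) (hj : Function.Injective j)
    (hip : Function.Exact i p) (hjq : Function.Exact j q) : StRet R K L := by
  obtain ⟨U, u, v, c, h1, h2⟩ := h.core hp hq hi hj hip hjq
  exact ⟨ModuleCat.of R P, ‹_›, u, v, i, c, h2⟩

lemma StRet.kill [Module.Projective R P] [Module.Projective R Q]
    (h : StRet R A B) {p : P →ₗ[R] A} {q : Q →ₗ[R] B} {i : K →ₗ[R] P} {j : L →ₗ[R] Q}
    (hp : Function.Surjective p) (hq : Function.Surjective q)
    (hi : Function.Injective i) (hj : Function.Injective j)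
    (hip : Function.Exact i p) (hjq : Function.Exact j q) (x : R)
    (hx : ∀ c : L →ₗ[R] W, ∃ g : Q →ₗ[R] W, g ∘ₗ j = x • c) (c : K →ₗ[R] W) :
    ∃ g : P →ₗ[R] W, g ∘ₗ i = x • c := by
  obtain ⟨U, u, v, γ, h1, h2⟩ := h.core hp hq hi hj hip hjq
  obtain ⟨g, hg⟩ := hx (c ∘ₗ v)
  replace hg : ∀ z, g (j z) = x • c (v z) := fun z => congrArg (fun t => t z) hg
  refine ⟨g ∘ₗ U - x • (c ∘ₗ γ), ?_⟩
  ext z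
  simp [h1, hg, h2]

lemma StRet.of_equiv (e : A ≃ₗ[R] B) : StRet R A B :=
  ⟨ModuleCat.of R R, by change Module.Projective R R; infer_instance,
    e.toLinearMap, e.symm.toLinearMap, 0, 0, by simp⟩

lemma StRet.precomp_equiv (e : K ≃ₗ[R] A) (h : StRet R A B) : StRet R K B := by
  obtain ⟨G, hG, u, v, a, b, huv⟩ := h
  exact ⟨G, hG, u ∘ₗ e.toLinearMap, e.symm.toLinearMap ∘ₗ v, a ∘ₗ e.toLinearMap,
    e.symm.toLinearMap ∘ₗ b, by simp [huv]⟩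

/-- `x • id` on `A` lifts through the cover -/
lemma exists_section_of_extend {p : P →ₗ[R] A} (hp : Function.Surjective p)
    {i : K →ₗ[R] P} (hip : Function.Exact i p) (x : R) (g : P →ₗ[R] K)
    (hg : ∀ z, g (i z) = x • z) : ∃ s : A →ₗ[R] P, ∀ z, p (s z) = x • z := by
  let e := p.quotKerEquivOfSurjective hp
  have hk : LinearMap.ker p ≤ LinearMap.ker (x • LinearMap.id - i ∘ₗ g) := by
    intro z hz
    obtain ⟨y, rfl⟩ := (hip z).1 hz
    simp [hg]
  refine ⟨(LinearMap.ker p).liftQ _ hk ∘ₗ e.symm.toLinearMap, fun z => ?_⟩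
  obtain ⟨y, rfl⟩ := hp z
  have h1 : e.symm (p y) = Submodule.Quotient.mk y := by
    rw [LinearEquiv.symm_apply_eq]; rfl
  have : p (i (g y)) = 0 := (hip _).2 ⟨_, rfl⟩
  simp [h1, this]

end StRetSec

end

section Cov
variable {R : Type} [CommRing R] [IsLocalRing R]
variable {A B F G N Q : Type} [AddCommGroup A] [Module R A] [AddCommGroup B] [Module R B]
  [AddCommGroup F] [Module R F] [AddCommGroup G] [Module R G] [AddCommGroup N] [Module R N]
  [AddCommGroup Q] [Module R Q]

/-- minimal cover -/
def MinCov (f : F →ₗ[R] A) : Prop :=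
  Function.Surjective f ∧ LinearMap.ker f ≤ (maximalIdeal R) • (⊤ : Submodule R F)

lemma map_mem_msmul (φ : F →ₗ[R] G) {z : F} (hz : z ∈ (maximalIdeal R) • (⊤ : Submodule R F)) :
    φ z ∈ (maximalIdeal R) • (⊤ : Submodule R G) := by
  have : φ z ∈ Submodule.map φ ((maximalIdeal R) • (⊤ : Submodule R F)) := ⟨z, hz, rfl⟩
  rw [Submodule.map_smul''] at this
  exact Submodule.smul_mono le_rfl le_top this

lemma surj_of_nak [Module.Finite R G] (φ : F →ₗ[R] G)
    (h : ∀ y, ∃ z, y - φ z ∈ (maximalIdeal R) • (⊤ : Submodule R G)) :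
    Function.Surjective φ := by
  rw [← LinearMap.range_eq_top, eq_top_iff]
  apply Submodule.le_of_le_smul_of_le_jacobson_bot (I := maximalIdeal R) Module.Finite.fg_top
    (maximalIdeal_le_jacobson _)
  intro y _
  obtain ⟨z, hz⟩ := h y
  have : y = φ z + (y - φ z) := by abel
  rw [this]
  exact Submodule.add_mem_sup ⟨z, rfl⟩ hz

lemma MinCov.surj_of_comm [Module.Finite R G] {f : F →ₗ[R] A} {g : G →ₗ[R] A}
    (hf : MinCov f) (hg : MinCov g) (φ : F →ₗ[R] G) (h : ∀ z, g (φ z) = f z) :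
    Function.Surjective φ := by
  apply surj_of_nak
  intro y
  obtain ⟨z, hz⟩ := hf.1 (g y)
  exact ⟨z, hg.2 (by simp [h, hz])⟩

lemma MinCov.unique [Module.Finite R F] [Module.Finite R G] [Module.Projective R F]
    [Module.Projective R G] {f : F →ₗ[R] A} {g : G →ₗ[R] B} (hf : MinCov f) (hg : MinCov g)
    (e : A ≃ₗ[R] B) : Nonempty (LinearMap.ker f ≃ₗ[R] LinearMap.ker g) := by
  have hf' : MinCov (e.toLinearMap ∘ₗ f) := by
    refine ⟨e.surjective.comp hf.1, ?_⟩
    rw [LinearEquiv.ker_comp]; exact hf.2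
  obtain ⟨φ, hφ⟩ := Module.projective_lifting_property g (e.toLinearMap ∘ₗ f) hg.1
  obtain ⟨ψ, hψ⟩ := Module.projective_lifting_property (e.toLinearMap ∘ₗ f) g hf'.1
  replace hφ : ∀ z, g (φ z) = e (f z) := fun z => congrArg (fun t => t z) hφ
  replace hψ : ∀ z, e (f (ψ z)) = g z := fun z => congrArg (fun t => t z) hψ
  have s1 := hf'.surj_of_comm hg φ hφ
  have s2 := hg.surj_of_comm hf' ψ hψ
  have inj : Function.Injective (ψ ∘ₗ φ) :=
    OrzechProperty.injective_of_surjective_endomorphism _ (by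
      rw [LinearMap.coe_comp]; exact s2.comp s1)
  have inj1 : Function.Injective φ := by
    rw [LinearMap.coe_comp] at inj; exact inj.of_comp
  have hk : ∀ z, z ∈ LinearMap.ker f → φ z ∈ LinearMap.ker g := by
    intro z hz
    rw [LinearMap.mem_ker] at hz ⊢
    rw [hφ, hz, map_zero]
  refine ⟨LinearEquiv.ofBijective (φ.restrict hk) ⟨?_, ?_⟩⟩
  · intro a b hab
    exact Subtype.ext (inj1 (congrArg Subtype.val hab))
  · rintro ⟨y, hy⟩
    obtain ⟨z, rfl⟩ := s1 y
    rw [LinearMap.mem_ker, hφ] at hy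
    exact ⟨⟨z, e.map_eq_zero_iff.1 hy⟩, rfl⟩

lemma exists_minCov [Module.Finite R A] :
    ∃ (n : ℕ) (f : (Fin n → R) →ₗ[R] A), MinCov f := by
  let I := maximalIdeal R
  let V := A ⧸ (I • (⊤ : Submodule R A))
  let _ : Field (R ⧸ I) := Ideal.Quotient.field I
  have : Module.Finite (R ⧸ I) V := Module.Finite.of_restrictScalars_finite R _ _
  let b := Module.finBasis (R ⧸ I) V
  have hsurj : Function.Surjective (Submodule.mkQ (I • (⊤ : Submodule R A))) :=
    Submodule.mkQ_surjective _
  choose v hv using fun i => hsurj (b i)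
  let n := Module.finrank (R ⧸ I) V
  let f : (Fin n → R) →ₗ[R] A := Fintype.linearCombination R v
  have key : ∀ c : Fin n → R, Submodule.mkQ (I • (⊤ : Submodule R A)) (f c) =
      ∑ i, (Ideal.Quotient.mk I (c i)) • b i := by
    intro c
    simp only [f, Fintype.linearCombination_apply, map_sum, map_smul, hv]
    rfl
  refine ⟨n, f, surj_of_nak _ ?_, ?_⟩
  · intro y
    choose c hc using fun i => Ideal.Quotient.mk_surjective (b.repr (Submodule.mkQ _ y) i)
    refine ⟨c, ?_⟩
    rw [← Submodule.Quotient.mk_eq_zero, ← Submodule.mkQ_apply, map_sub, sub_eq_zero, key]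
    simp only [hc]
    exact (b.sum_repr _).symm
  · intro c hc
    have h0 := key c
    rw [LinearMap.mem_ker.1 hc, map_zero] at h0
    have h1 := Fintype.linearIndependent_iff.1 b.linearIndependent _ h0.symm
    have : c = ∑ i, c i • (Pi.single i 1 : Fin n → R) := by
      simpa using (pi_eq_sum_univ' c)
    rw [this]
    refine Submodule.sum_mem _ fun i _ => Submodule.smul_mem_smul ?_ trivial
    exact Ideal.Quotient.eq_zero_iff_mem.1 (h1 i)

/-- the pullback of `f` along multiplication by `x` -/
def PB (x : R) (f : F →ₗ[R] N) : Submodule R (F × N) :=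
  LinearMap.ker (f ∘ₗ LinearMap.fst R F N - x • LinearMap.snd R F N)

lemma mem_PB {x : R} {f : F →ₗ[R] N} {z : F × N} : z ∈ PB x f ↔ f z.1 = x • z.2 := by
  simp [PB, sub_eq_zero]

lemma PB_split {x : R} {f : F →ₗ[R] N} (s : N →ₗ[R] F) (hs : ∀ z, f (s z) = x • z) :
    Nonempty (PB x f ≃ₗ[R] LinearMap.ker f × N) := by
  let φ : LinearMap.ker f × N →ₗ[R] PB x f :=
    (((LinearMap.ker f).subtype ∘ₗ LinearMap.fst R _ _ + s ∘ₗ LinearMap.snd R _ _).prod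
      (LinearMap.snd R _ _)).codRestrict _ (by
        intro z
        have := z.1.2
        rw [LinearMap.mem_ker] at this
        simp [mem_PB, hs])
  have hφ : ∀ z, (φ z : F × N) = (z.1 + s z.2, z.2) := fun z => rfl
  refine ⟨(LinearEquiv.ofBijective φ ⟨?_, ?_⟩).symm⟩
  · rw [injective_iff_map_eq_zero]
    rintro ⟨a, b⟩ h
    have := congrArg Subtype.val h
    rw [hφ] at this
    simp only [Submodule.coe_zero, Prod.mk_eq_zero] at this
    obtain ⟨h1, rfl⟩ := this
    simpa using h1
  · rintro ⟨⟨a, b⟩, h⟩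
    rw [mem_PB] at h
    exact ⟨(⟨a - s b, by simp_all⟩, b), Subtype.ext (by simp [hφ])⟩

lemma cover_quot [Module.Finite R N] [Module.Projective R F] {x : R} (hx : x ∈ maximalIdeal R)
    (hreg : ∀ z : N, x • z = 0 → z = 0) {p : N →ₗ[R] Q} (hp : Function.Surjective p)
    (hpk : ∀ z, p z = 0 ↔ ∃ y, z = x • y) {g : F →ₗ[R] Q} (hg : MinCov g) :
    ∃ f : F →ₗ[R] N, MinCov f ∧ Nonempty (LinearMap.ker g ≃ₗ[R] PB x f) := by
  obtain ⟨f, hf⟩ := Module.projective_lifting_property p g hp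
  replace hf : ∀ z, p (f z) = g z := fun z => congrArg (fun t => t z) hf
  refine ⟨f, ⟨surj_of_nak f fun y => ?_, fun z hz => hg.2 ?_⟩, ?_⟩
  · obtain ⟨z, hz⟩ := hg.1 (p y)
    obtain ⟨w, hw⟩ := (hpk (y - f z)).1 (by simp [hf, hz])
    exact ⟨z, hw ▸ Submodule.smul_mem_smul hx trivial⟩
  · rw [LinearMap.mem_ker] at hz ⊢
    rw [← hf, hz, map_zero]
  · let φ : PB x f →ₗ[R] LinearMap.ker g :=
      (LinearMap.fst R F N ∘ₗ (PB x f).subtype).codRestrict _ (by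
        rintro ⟨⟨a, b⟩, h⟩
        rw [mem_PB] at h
        rw [LinearMap.mem_ker, ← hf]
        exact (hpk _).2 ⟨b, h⟩)
    refine ⟨(LinearEquiv.ofBijective φ ⟨?_, ?_⟩).symm⟩
    · rw [injective_iff_map_eq_zero]
      rintro ⟨⟨a, b⟩, h⟩ h0
      have h1 : a = 0 := congrArg Subtype.val h0
      rw [mem_PB] at h
      subst h1
      have : b = 0 := hreg b (by simpa using h.symm)
      subst this
      rfl
    · rintro ⟨a, ha⟩
      rw [LinearMap.mem_ker, ← hf] at ha
      obtain ⟨b, hb⟩ := (hpk _).1 ha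
      exact ⟨⟨(a, b), mem_PB.2 hb⟩, rfl⟩

lemma cover_PB {x : R} (hx : x ∈ maximalIdeal R) {f : F →ₗ[R] N} (hf : MinCov f)
    {g : G →ₗ[R] LinearMap.ker f} (hg : MinCov g) :
    ∃ φ : G × F →ₗ[R] PB x f, MinCov φ ∧ Nonempty (LinearMap.ker φ ≃ₗ[R] PB x g) := by
  have hfg : ∀ u, f (g u) = 0 := fun u => (g u).2
  let φ : G × F →ₗ[R] PB x f :=
    (((LinearMap.ker f).subtype ∘ₗ g ∘ₗ LinearMap.fst R _ _ + x • LinearMap.snd R _ _).prod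
      (f ∘ₗ LinearMap.snd R _ _)).codRestrict _ (by
        intro z
        simp [mem_PB, hfg])
  have hφ : ∀ z, (φ z : F × N) = (g z.1 + x • z.2, f z.2) := fun z => rfl
  have hker : ∀ z, φ z = 0 ↔ (g z.1 : F) + x • z.2 = 0 ∧ f z.2 = 0 := by
    intro z
    rw [Subtype.ext_iff, hφ]; simp
  refine ⟨φ, ⟨?_, ?_⟩, ?_⟩
  · rintro ⟨⟨a, b⟩, h⟩
    rw [mem_PB] at h
    obtain ⟨v, rfl⟩ := hf.1 b
    obtain ⟨u, hu⟩ := hg.1 ⟨a - x • v, by simp_all⟩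
    exact ⟨(u, v), Subtype.ext (by simp [hφ, hu])⟩
  · rintro ⟨u, v⟩ h
    obtain ⟨h1, h2⟩ := (hker _).1 h
    obtain ⟨w, hw⟩ := hg.1 ⟨v, h2⟩
    have hv := hf.2 h2
    have hu : u + x • w ∈ LinearMap.ker g := by
      rw [LinearMap.mem_ker]
      apply Subtype.ext
      simpa [hw] using h1
    have hu2 : u ∈ (maximalIdeal R) • (⊤ : Submodule R G) := by
      have := Submodule.sub_mem _ (hg.2 hu) (Submodule.smul_mem_smul (n := w) hx (Submodule.mem_top (x := w)))
      simpa using this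
    have e : ((u, v) : G × F) = LinearMap.inl R G F u + LinearMap.inr R G F v := by simp
    rw [e]
    exact Submodule.add_mem _ (map_mem_msmul _ hu2) (map_mem_msmul _ hv)
  · let ψ : PB x g →ₗ[R] LinearMap.ker φ :=
      (((LinearMap.fst R _ _).prod (-((LinearMap.ker f).subtype ∘ₗ LinearMap.snd R _ _))) ∘ₗ
        (PB x g).subtype).codRestrict _ (by
          rintro ⟨⟨u, w⟩, h⟩
          rw [mem_PB] at h
          have hw : f w = 0 := w.2
          rw [LinearMap.mem_ker, hker]
          simp at h
          simp [h, hw])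
    refine ⟨(LinearEquiv.ofBijective ψ ⟨?_, ?_⟩).symm⟩
    · rw [injective_iff_map_eq_zero]
      rintro ⟨⟨u, w⟩, h⟩ h0
      have h1 : ((u, -(w : F)) : G × F) = 0 := congrArg Subtype.val h0
      simp only [Prod.mk_eq_zero, neg_eq_zero, ZeroMemClass.coe_eq_zero] at h1
      obtain ⟨rfl, rfl⟩ := h1
      rfl
    · rintro ⟨⟨u, v⟩, h⟩
      obtain ⟨h1, h2⟩ := (hker _).1 h
      refine ⟨⟨(u, -⟨v, h2⟩), mem_PB.2 (Subtype.ext ?_)⟩, Subtype.ext ?_⟩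
      · simpa [add_eq_zero_iff_eq_neg] using h1
      · change ((u, - -v) : G × F) = (u, v)
        simp

end Cov

section Syz
variable {R : Type} [CommRing R] [IsLocalRing R]

lemma syz_of_cov {K A : ModuleCat.{0} R} {F : Type} [AddCommGroup F] [Module R F]
    [Module.Free R F] [Module.Finite R F] {f : F →ₗ[R] A} (hf : MinCov f)
    (e : K ≃ₗ[R] LinearMap.ker f) : IsSyzygyOf R K A := by
  let b := (Module.finBasis R F).equivFun
  refine ⟨Module.finrank R F, f ∘ₗ b.symm.toLinearMap, hf.1.comp b.symm.surjective, ?_, ⟨?_⟩⟩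
  · intro z hz
    have := map_mem_msmul b.toLinearMap (hf.2 (show b.symm z ∈ LinearMap.ker f from hz))
    simpa using this
  · refine e.trans (LinearEquiv.ofBijective (b.toLinearMap.restrict (p := LinearMap.ker f)
      (q := LinearMap.ker (f ∘ₗ b.symm.toLinearMap)) ?_) ⟨?_, ?_⟩)
    · intro z hz
      simpa using hz
    · intro a c hac
      exact Subtype.ext (b.injective (congrArg Subtype.val hac))
    · rintro ⟨y, hy⟩
      exact ⟨⟨b.symm y, hy⟩, Subtype.ext (b.apply_symm_apply y)⟩

lemma IsSyzygyOf.unique {K A K' A' : ModuleCat.{0} R} (h : IsSyzygyOf R K A)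
    (h' : IsSyzygyOf R K' A') (e : A ≃ₗ[R] A') : Nonempty (K ≃ₗ[R] K') := by
  obtain ⟨n, f, f1, f2, ⟨i⟩⟩ := h
  obtain ⟨m, g, g1, g2, ⟨j⟩⟩ := h'
  obtain ⟨t⟩ := MinCov.unique (f := f) (g := g) ⟨f1, f2⟩ ⟨g1, g2⟩ e
  exact ⟨i.trans (t.trans j.symm)⟩

lemma IsSyzygyOf.congr {K A K' A' : ModuleCat.{0} R} (h : IsSyzygyOf R K A)
    (i : K' ≃ₗ[R] K) (e : A ≃ₗ[R] A') : IsSyzygyOf R K' A' := by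
  obtain ⟨n, f, f1, f2, ⟨j⟩⟩ := h
  refine ⟨n, e.toLinearMap ∘ₗ f, e.surjective.comp f1, ?_, ⟨?_⟩⟩
  · rw [LinearEquiv.ker_comp]; exact f2
  · rw [LinearEquiv.ker_comp]; exact i.trans j

lemma IsSyzygyOf.finite [IsNoetherianRing R] {K A : ModuleCat.{0} R} (h : IsSyzygyOf R K A) :
    Module.Finite R K := by
  obtain ⟨n, f, f1, f2, ⟨j⟩⟩ := h
  exact Module.Finite.equiv j.symm

lemma IsNthSyzygyOf.unique {n : ℕ} : ∀ {K A K' A' : ModuleCat.{0} R}, IsNthSyzygyOf R n K A →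
    IsNthSyzygyOf R n K' A' → (A ≃ₗ[R] A') → Nonempty (K ≃ₗ[R] K') := by
  induction n with
  | zero =>
    rintro K A K' A' ⟨i⟩ ⟨j⟩ e
    exact ⟨i.trans (e.trans j.symm)⟩
  | succ n ih =>
    rintro K A K' A' ⟨L, h1, h2⟩ ⟨L', h1', h2'⟩ e
    obtain ⟨t⟩ := h1.unique h1' e
    exact ih h2 h2' t

lemma IsNthSyzygyOf.succ_iff {n : ℕ} : ∀ {K A : ModuleCat.{0} R}, IsNthSyzygyOf R (n+1) K A ↔
    ∃ L, IsNthSyzygyOf R n L A ∧ IsSyzygyOf R K L := by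
  induction n with
  | zero =>
    intro K A
    constructor
    · rintro ⟨L, h1, ⟨i⟩⟩
      exact ⟨A, ⟨LinearEquiv.refl R A⟩, h1.congr i (LinearEquiv.refl R A)⟩
    · rintro ⟨L, ⟨i⟩, h1⟩
      exact ⟨K, h1.congr (LinearEquiv.refl R K) i, ⟨LinearEquiv.refl R K⟩⟩
  | succ n ih =>
    intro K A
    constructor
    · rintro ⟨L, h1, h2⟩
      obtain ⟨L', h3, h4⟩ := ih.1 h2
      exact ⟨L', ⟨L, h1, h3⟩, h4⟩
    · rintro ⟨L', ⟨L, h1, h3⟩, h4⟩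
      exact ⟨L, h1, ih.2 ⟨L', h3, h4⟩⟩

lemma IsNthSyzygyOf.finite [IsNoetherianRing R] {n : ℕ} {K A : ModuleCat.{0} R}
    (h : IsNthSyzygyOf R n K A) (hA : Module.Finite R A) : Module.Finite R K := by
  cases n with
  | zero =>
    obtain ⟨i⟩ := h
    exact Module.Finite.equiv i.symm
  | succ n =>
    obtain ⟨L, _, h⟩ := IsNthSyzygyOf.succ_iff.1 h
    exact h.finite

lemma IsSyzygyOf.pi {ι : Type} [Fintype ι] [DecidableEq ι] {K A : ι → ModuleCat.{0} R}
    (h : ∀ i, IsSyzygyOf R (K i) (A i)) :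
    IsSyzygyOf R (ModuleCat.of R (∀ i, K i)) (ModuleCat.of R (∀ i, A i)) := by
  choose n f f1 f2 e using h
  let g : (∀ i, Fin (n i) → R) →ₗ[R] (∀ i, A i) :=
    LinearMap.pi fun i => f i ∘ₗ LinearMap.proj i
  have hg : MinCov g := by
    constructor
    · intro y
      choose z hz using fun i => f1 i (y i)
      exact ⟨z, funext hz⟩
    · intro z hz
      have h0 : ∀ i, f i (z i) = 0 := fun i => congrFun hz i
      have : z = ∑ i, LinearMap.single R (fun i => Fin (n i) → R) i (z i) := by
        simp [Finset.univ_sum_single]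
      rw [this]
      exact Submodule.sum_mem _ fun i _ => map_mem_msmul _ (f2 i (h0 i))
  have e' : ∀ i, K i ≃ₗ[R] LinearMap.ker (f i) := fun i => (e i).some
  let φ : (∀ i, K i) →ₗ[R] LinearMap.ker g :=
    (LinearMap.pi fun i => (LinearMap.ker (f i)).subtype ∘ₗ (e' i).toLinearMap ∘ₗ
      LinearMap.proj i).codRestrict _ (fun z => by
        rw [LinearMap.mem_ker]
        funext i
        exact (e' i (z i)).2)
  refine syz_of_cov (A := ModuleCat.of R (∀ i, A i)) (K := ModuleCat.of R (∀ i, K i)) hg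
    (LinearEquiv.ofBijective φ ⟨?_, ?_⟩)
  · intro a b hab
    funext i
    exact (e' i).injective (Subtype.ext (congrFun (congrArg Subtype.val hab) i))
  · rintro ⟨y, hy⟩
    have h0 : ∀ i, f i (y i) = 0 := fun i => congrFun hy i
    refine ⟨fun i => (e' i).symm ⟨y i, h0 i⟩, Subtype.ext (funext fun i => ?_)⟩
    exact congrArg Subtype.val ((e' i).apply_symm_apply _)

lemma nth_syz_quot [IsNoetherianRing R] {N Q : ModuleCat.{0} R} [Module.Finite R N] {x : R}
    (hx : x ∈ maximalIdeal R)
    (hreg : ∀ z : N, x • z = 0 → z = 0) {p : N →ₗ[R] Q} (hp : Function.Surjective p)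
    (hpk : ∀ z, p z = 0 ↔ ∃ y, z = x • y) (n : ℕ) : ∀ K : ModuleCat.{0} R,
    IsNthSyzygyOf R (n+1) K Q → ∃ L : ModuleCat.{0} R, IsNthSyzygyOf R n L N ∧
      ∃ (m : ℕ) (f : (Fin m → R) →ₗ[R] L), MinCov f ∧ Nonempty (K ≃ₗ[R] PB x f) := by
  induction n with
  | zero =>
    intro K hK
    obtain ⟨L, ⟨m, g, g1, g2, ⟨i⟩⟩, ⟨j⟩⟩ := hK
    obtain ⟨f, hf, ⟨t⟩⟩ := cover_quot hx hreg hp hpk (g := g) ⟨g1, g2⟩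
    exact ⟨N, ⟨LinearEquiv.refl R N⟩, m, f, hf, ⟨j.trans (i.trans t)⟩⟩
  | succ n ih =>
    intro K hK
    obtain ⟨K1, h1, h2⟩ := IsNthSyzygyOf.succ_iff.1 hK
    obtain ⟨L, hL, m, f, hf, ⟨e⟩⟩ := ih K1 h1
    obtain ⟨l, g, hg⟩ := exists_minCov (R := R) (A := LinearMap.ker f)
    obtain ⟨φ, hφ, ⟨t⟩⟩ := cover_PB hx hf hg
    refine ⟨ModuleCat.of R (LinearMap.ker f), IsNthSyzygyOf.succ_iff.2 ⟨L, hL, m, f, hf.1, hf.2,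
      ⟨LinearEquiv.refl R _⟩⟩, l, g, hg, ?_⟩
    have h3 : IsSyzygyOf R (ModuleCat.of R (PB x g)) (ModuleCat.of R (PB x f)) :=
      syz_of_cov (A := ModuleCat.of R (PB x f)) (K := ModuleCat.of R (PB x g)) hφ t.symm
    exact h2.unique h3 e

/-- multiplication by `x` on `L` factors through a projective -/
def StZero (x : R) (L : ModuleCat.{0} R) : Prop :=
  ∃ (P : ModuleCat.{0} R) (_ : Module.Projective R P) (p : P →ₗ[R] L) (s : L →ₗ[R] P),
    ∀ z, p (s z) = x • z

lemma exists_section_pi {ι : Type} [Fintype ι] [DecidableEq ι] {A : ι → ModuleCat.{0} R} {x : R}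
    (h : ∀ i, StZero x (A i)) {F L : Type} [AddCommGroup F] [Module R F] [AddCommGroup L]
    [Module R L] (e : L ≃ₗ[R] ∀ i, A i) {f : F →ₗ[R] L} (hf : Function.Surjective f) :
    ∃ s : L →ₗ[R] F, ∀ z, f (s z) = x • z := by
  choose P hP p s hs using h
  have : ∀ i, ∃ t : P i →ₗ[R] F, ∀ z, f (t z) = e.symm (LinearMap.single R (fun i => A i) i (p i z)) := by
    intro i
    have := hP i
    obtain ⟨t, ht⟩ := Module.projective_lifting_property f
      (e.symm.toLinearMap ∘ₗ LinearMap.single R (fun i => A i) i ∘ₗ p i) hf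
    exact ⟨t, fun z => congrArg (fun u => u z) ht⟩
  choose t ht using this
  refine ⟨∑ i, t i ∘ₗ s i ∘ₗ LinearMap.proj i ∘ₗ e.toLinearMap, fun z => ?_⟩
  simp only [LinearMap.sum_apply, map_sum, LinearMap.comp_apply, ht, hs]
  rw [← map_sum]
  simp only [map_smul, ← Finset.smul_sum]
  congr 1
  rw [LinearEquiv.symm_apply_eq]
  simp [Finset.univ_sum_single]

lemma stRet_nth {M : ModuleCat.{0} R} (P : ProjectiveResolution M) (n : ℕ) :
    ∀ (j : ℕ) (K B : ModuleCat.{0} R), StRet R B (resA R M P j) → IsNthSyzygyOf R n K B →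
      StRet R K (resA R M P (j+n)) := by
  induction n with
  | zero =>
    rintro j K B hB ⟨e⟩
    exact hB.precomp_equiv e
  | succ n ih =>
    rintro j K B hB ⟨K', ⟨m, f, f1, f2, ⟨i⟩⟩, h⟩
    have := res_proj R M P j
    have h1 : StRet R K' (resA R M P (j+1)) := StRet.precomp_equiv i
      (hB.ker (i := (LinearMap.ker f).subtype) f1 (resQ_surj R M P j) Subtype.val_injective
        (resI_inj R M P j)
        (LinearMap.exact_subtype_ker_map f) (res_exact R M P j))
    have := ih (j+1) K K' h1 h
    rwa [show j + (n+1) = j + 1 + n by omega]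

lemma stZero_of_kill [IsNoetherianRing R] (M : ModuleCat.{0} R) [Module.Finite R M] (n : ℕ) (x : R)
    (h : ∀ Ω : ModuleCat.{0} R, IsNthSyzygyOf R (n+1) Ω M →
        ∀ e : ((Ext R (ModuleCat.{0} R) (n+1)).obj (Opposite.op M)).obj Ω, x • e = 0)
    (L : ModuleCat.{0} R) (hL : IsNthSyzygyOf R n L M) : StZero x L := by
  let P := ProjectiveResolution.of M
  have hr : StRet R L (resA R M P n) := by
    have := stRet_nth P n 0 L M (StRet.of_equiv (LinearEquiv.refl R M)) hL
    rwa [Nat.zero_add] at this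
  have := hL.finite inferInstance
  obtain ⟨m, f, hf⟩ := exists_minCov (R := R) (A := L)
  let W := ModuleCat.of R (LinearMap.ker f)
  have hW : IsNthSyzygyOf R (n+1) W M := IsNthSyzygyOf.succ_iff.2
    ⟨L, hL, m, f, hf.1, hf.2, ⟨LinearEquiv.refl R _⟩⟩
  have := res_proj R M P n
  obtain ⟨g, hg⟩ := hr.kill (W := W) (i := (LinearMap.ker f).subtype) hf.1 (resQ_surj R M P n)
    Subtype.val_injective
    (resI_inj R M P n) (LinearMap.exact_subtype_ker_map f) (res_exact R M P n) x
    (res_kill R M W P n x (h W hW)) LinearMap.id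
  obtain ⟨s, hs⟩ := exists_section_of_extend hf.1 (i := (LinearMap.ker f).subtype)
    (LinearMap.exact_subtype_ker_map f) x g (fun z => congrArg (fun t => t z) hg)
  exact ⟨ModuleCat.of R (Fin m → R), inferInstanceAs (Module.Projective R (Fin m → R)), f, s, hs⟩

end Syz

section Main
variable {R : Type} [CommRing R] [IsLocalRing R]

lemma regroup {ι : Type} [Fintype ι] (n : ℕ) (d : ι → ℕ)
    (hd : ∀ k, (∑ i, if d i = k then 1 else 0) = Nat.choose n k) (Om : ℕ → ModuleCat.{0} R) :
    Nonempty ((∀ i, Om (d i)) ≃ₗ[R] Π k : Fin (n + 1), Fin (Nat.choose n k) → Om k) := by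
  have hle : ∀ i, d i < n + 1 := by
    intro i
    by_contra hlt
    have h0 := hd (d i)
    rw [Nat.choose_eq_zero_of_lt (by omega), Finset.sum_eq_zero_iff] at h0
    simpa using h0 i (Finset.mem_univ _)
  let d' : ι → Fin (n+1) := fun i => ⟨d i, hle i⟩
  have hcard : ∀ k : Fin (n+1), Fintype.card {i // d' i = k} = Nat.choose n k := by
    intro k
    rw [← hd k, Fintype.card_subtype, Finset.card_filter]
    simp [d', Fin.ext_iff]
  let ek : ∀ k : Fin (n+1), Fin (Nat.choose n k) ≃ {i // d' i = k} := fun k =>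
    (finCongr (hcard k).symm).trans (Fintype.equivFin _).symm
  let σ : (Σ k : Fin (n+1), Fin (Nat.choose n k)) ≃ ι :=
    (Equiv.sigmaCongrRight ek).trans (Equiv.sigmaFiberEquiv d')
  have hσ : ∀ s, d (σ s) = s.1 := fun s => congrArg Fin.val (ek s.1 s.2).2
  have e1 : (∀ i, Om (d i)) ≃ₗ[R] ∀ s, Om (d (σ s)) :=
    (LinearEquiv.piCongrLeft R (fun i => Om (d i)) σ).symm
  have e2 : (∀ s, Om (d (σ s))) ≃ₗ[R]
      ∀ s : (Σ k : Fin (n+1), Fin (Nat.choose n k)), Om s.1 :=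
    LinearEquiv.piCongrRight fun s => by rw [hσ s]
  have e3 : (∀ s : (Σ k : Fin (n+1), Fin (Nat.choose n k)), Om s.1) ≃ₗ[R]
      ∀ k : Fin (n+1), Fin (Nat.choose n k) → Om k :=
    LinearEquiv.piCurry R (fun (k : Fin (n+1)) (_ : Fin (Nat.choose n k)) => Om k)
  exact ⟨e1.trans (e2.trans e3)⟩

open Pointwise in
lemma main_ind [IsNoetherianRing R] (M : Type) [AddCommGroup M] [Module R M] [Module.Finite R M]
    (Om : ℕ → ModuleCat.{0} R) (xs : List R) :
    (∀ x ∈ xs, x ∈ maximalIdeal R) → RingTheory.Sequence.IsWeaklyRegular M xs →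
    (∀ x ∈ xs, ∀ i < xs.length, ∀ L : ModuleCat.{0} R,
      IsNthSyzygyOf R i L (ModuleCat.of R M) → StZero x L) →
    (∀ i ≤ xs.length, IsNthSyzygyOf R i (Om i) (ModuleCat.of R M)) →
    ∀ K : ModuleCat.{0} R, IsNthSyzygyOf R xs.length K
      (ModuleCat.of R (M ⧸ (Ideal.ofList xs • (⊤ : Submodule R M)))) →
    ∃ (ι : Type) (_ : Fintype ι) (d : ι → ℕ),
      (∀ k, (∑ i, if d i = k then 1 else 0) = Nat.choose xs.length k) ∧
      Nonempty (K ≃ₗ[R] ∀ i, Om (d i)) := by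
  induction xs using List.reverseRecOn with
  | nil =>
    intro _ _ _ hOm K hK
    obtain ⟨e⟩ := hK
    obtain ⟨e0⟩ := hOm 0 le_rfl
    let eq : (M ⧸ (Ideal.ofList ([] : List R) • (⊤ : Submodule R M))) ≃ₗ[R] M :=
      Submodule.quotEquivOfEqBot _ (by simp)
    refine ⟨Unit, inferInstance, fun _ => 0, fun k => ?_, ⟨?_⟩⟩
    · cases k <;> simp
    · exact (e.trans (eq.trans e0.symm)).trans
        (LinearEquiv.funUnique Unit R (Om 0)).symm
  | append_singleton ys x ih =>
    intro hm hreg hst hOm K hK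
    have hlen : (ys ++ [x]).length = ys.length + 1 := by simp
    rw [hlen] at hK hst hOm
    rw [RingTheory.Sequence.isWeaklyRegular_append_iff] at hreg
    obtain ⟨hreg1, hreg2⟩ := hreg
    rw [RingTheory.Sequence.isWeaklyRegular_singleton_iff] at hreg2
    let N := ModuleCat.of R (M ⧸ (Ideal.ofList ys • (⊤ : Submodule R M)))
    let Q := ModuleCat.of R (M ⧸ (Ideal.ofList (ys ++ [x]) • (⊤ : Submodule R M)))
    have hNf : Module.Finite R N :=
      inferInstanceAs (Module.Finite R (M ⧸ (Ideal.ofList ys • (⊤ : Submodule R M))))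
    have hsub : Ideal.ofList (ys ++ [x]) • (⊤ : Submodule R M) =
        Ideal.ofList ys • (⊤ : Submodule R M) ⊔ x • (⊤ : Submodule R M) := by
      rw [Ideal.ofList_append, Submodule.sup_smul, Ideal.ofList_singleton,
        Submodule.ideal_span_singleton_smul]
    have hle : Ideal.ofList ys • (⊤ : Submodule R M) ≤
        Ideal.ofList (ys ++ [x]) • (⊤ : Submodule R M) := by
      rw [hsub]; exact le_sup_left
    let p : N →ₗ[R] Q := Submodule.factor hle
    have hp : Function.Surjective p := Submodule.factor_surjective hle
    have hpk : ∀ z : N, p z = 0 ↔ ∃ y : N, z = x • y := by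
      intro z
      obtain ⟨m, rfl⟩ := Submodule.mkQ_surjective _ z
      change (Submodule.Quotient.mk m :
        M ⧸ (Ideal.ofList (ys ++ [x]) • (⊤ : Submodule R M))) = 0 ↔ _
      rw [Submodule.Quotient.mk_eq_zero, hsub, Submodule.mem_sup]
      constructor
      · rintro ⟨a, ha, b, hb, rfl⟩
        obtain ⟨c, _, rfl⟩ := (Submodule.mem_smul_pointwise_iff_exists _ _ _).1 hb
        refine ⟨Submodule.mkQ _ c, ?_⟩
        rw [map_add, map_smul, Submodule.mkQ_apply, (Submodule.Quotient.mk_eq_zero _).2 ha,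
          zero_add]
      · rintro ⟨y, hy⟩
        obtain ⟨c, rfl⟩ := Submodule.mkQ_surjective _ y
        refine ⟨m - x • c, ?_, x • c, ?_, by abel⟩
        · rw [← map_smul] at hy
          exact (Submodule.Quotient.eq _).1 hy
        · exact (Submodule.mem_smul_pointwise_iff_exists _ _ _).2 ⟨c, Submodule.mem_top, rfl⟩
    have hxm : x ∈ maximalIdeal R := hm x (by simp)
    have hxr : ∀ z : N, x • z = 0 → z = 0 := fun z hz => hreg2 (hz.trans (smul_zero x).symm)
    obtain ⟨L, hL, m, f, hf, ⟨e⟩⟩ := nth_syz_quot hxm hxr hp hpk ys.length K hK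
    obtain ⟨ι, _, d, hd, ⟨t⟩⟩ := ih (fun y hy => hm y (by simp [hy])) hreg1
      (fun y hy i hi => hst y (by simp [hy]) i (by omega)) (fun i hi => hOm i (by omega)) L hL
    classical
    have hdl : ∀ i, d i < ys.length + 1 := by
      intro i
      by_contra hlt
      have h0 := hd (d i)
      rw [Nat.choose_eq_zero_of_lt (by omega), Finset.sum_eq_zero_iff] at h0
      simpa using h0 i (Finset.mem_univ _)
    obtain ⟨s, hs⟩ := exists_section_pi (A := fun i => Om (d i)) (x := x)
      (fun i => hst x (by simp) (d i) (hdl i) _ (hOm _ (hdl i).le)) t hf.1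
    obtain ⟨sp⟩ := PB_split s hs
    have hsyz : ∀ i, IsSyzygyOf R (Om (d i + 1)) (Om (d i)) := by
      intro i
      obtain ⟨K', h1, h2⟩ := IsNthSyzygyOf.succ_iff.1 (hOm (d i + 1) (hdl i))
      obtain ⟨u⟩ := h1.unique (hOm (d i) (hdl i).le) (LinearEquiv.refl R _)
      exact h2.congr (LinearEquiv.refl R _) u
    have hker : IsSyzygyOf R (ModuleCat.of R (LinearMap.ker f)) L :=
      ⟨m, f, hf.1, hf.2, ⟨LinearEquiv.refl R _⟩⟩
    obtain ⟨w⟩ := hker.unique (IsSyzygyOf.pi hsyz) t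
    have w' : LinearMap.ker f ≃ₗ[R] ∀ i, Om (d i + 1) := w
    refine ⟨ι ⊕ ι, inferInstance, Sum.elim (fun i => d i + 1) d, fun k => ?_, ⟨?_⟩⟩
    · rw [hlen, Fintype.sum_sum_type]
      change (∑ a, if d a + 1 = k then 1 else 0) + (∑ a, if d a = k then 1 else 0) = _
      rw [hd]
      cases k with
      | zero => simp
      | succ k =>
        simp only [Nat.add_right_cancel_iff]
        rw [hd, Nat.choose_succ_succ]
    · exact (e.trans sp).trans ((LinearEquiv.prodCongr w' t).trans
        (LinearEquiv.sumPiEquivProdPi R ι ι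
          (fun a => Om (Sum.elim (fun i => d i + 1) d a))).symm)

end Main

/-- if `x₁, …, xₙ` is an `R`- and `M`-sequence contained in
`⋂_{1 ≤ i,j ≤ n} Ann Extⁱ(M, Ωʲ M)`, then
`Ωⁿ(M/(x₁,…,xₙ)M) ≅ ⨁_{i=0}^n (Ωⁱ M)^(n choose i)`. -/
theorem nth_syzygy_quotient_regular_sequence
    [IsNoetherianRing R]
    (M : Type) [AddCommGroup M] [Module R M] [Module.Finite R M]
    (xs : List R)
    (hRreg : RingTheory.Sequence.IsRegular R xs)
    (hMreg : RingTheory.Sequence.IsRegular M xs)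
    (hann : ∀ x ∈ xs, ∀ i j : ℕ, 1 ≤ i → i ≤ xs.length → 1 ≤ j → j ≤ xs.length →
      ∀ Ω : ModuleCat.{0} R, IsNthSyzygyOf R j Ω (ModuleCat.of R M) →
        ∀ e : ((Ext R (ModuleCat.{0} R) i).obj
          (Opposite.op (ModuleCat.of R M))).obj Ω, x • e = 0)
    (K : ModuleCat.{0} R)
    (hK : IsNthSyzygyOf R xs.length K
      (ModuleCat.of R (M ⧸ (Ideal.ofList xs • (⊤ : Submodule R M)))))
    (Om : ℕ → ModuleCat.{0} R)
    (hOm : ∀ i ≤ xs.length, IsNthSyzygyOf R i (Om i) (ModuleCat.of R M)) :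
    Nonempty (K ≃ₗ[R]
      Π i : Fin (xs.length + 1), Fin (Nat.choose xs.length i) → Om i) := by
  have hm : ∀ x ∈ xs, x ∈ maximalIdeal R := by
    intro x hx
    have hne : Ideal.ofList xs ≠ ⊤ := by
      intro h
      apply hRreg.top_ne_smul
      rw [h]; simp
    exact IsLocalRing.le_maximalIdeal hne (Ideal.subset_span hx)
  obtain ⟨ι, _, d, hd, ⟨e⟩⟩ := main_ind M Om xs hm hMreg.toIsWeaklyRegular
    (fun x hx i hi L hL => stZero_of_kill (ModuleCat.of R M) i x
      (fun Ω hΩ => hann x hx (i+1) (i+1) (by omega) (by omega) (by omega) (by omega) Ω hΩ) L hL)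
    hOm K hK
  obtain ⟨g⟩ := regroup xs.length d hd Om
  exact ⟨e.trans g⟩
end
end

section
/- Let R be a commutative Noetherian local ring with residue field k, and let M be a finitely generated R-module of finite length. Then for every n ≥ 0, the n-th syzygy Ω^n M belongs to the extension closure of Ω^n k, i.e., the smallest subcategory of finitely generated R-modules containing Ω^n k that is closed under direct summands and extensions. -/
open CategoryTheory IsLocalRing

noncomputable section

variable (R : Type) [CommRing R] [IsLocalRing R]

/-- Not necessarily minimal `n`-th syzygies, by projective covers. -/
def PSyz : ℕ → ModuleCat.{0} R → ModuleCat.{0} R → Prop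
  | 0, K, M => Nonempty (K ≃ₗ[R] M)
  | n + 1, K, M => ∃ (P K' : ModuleCat.{0} R) (f : P →ₗ[R] M), Module.Projective R P ∧
      Function.Surjective f ∧ Nonempty (K' ≃ₗ[R] LinearMap.ker f) ∧ PSyz n K K'

theorem psyz_of_isNthSyzygyOf (n : ℕ) : ∀ (K M : ModuleCat.{0} R),
    IsNthSyzygyOf R n K M → PSyz R n K M := by
  induction n with
  | zero => intro K M h; exact h
  | succ n ih =>
    rintro K M ⟨K', ⟨m, f, hf, _, he⟩, h⟩
    exact ⟨ModuleCat.of R (Fin m → R), K', f,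
      inferInstanceAs (Module.Projective R (Fin m → R)), hf, he, ih _ _ h⟩

theorem psyz_congr (n : ℕ) (K M N : ModuleCat.{0} R) (e : M ≃ₗ[R] N)
    (h : PSyz R n K M) : PSyz R n K N := by
  cases n with
  | zero => exact h.elim fun a => ⟨a.trans e⟩
  | succ n =>
    obtain ⟨P, K', f, hP, hf, ⟨a⟩, h⟩ := h
    refine ⟨P, K', e.toLinearMap ∘ₗ f, hP, e.surjective.comp hf,
      ⟨a.trans (LinearEquiv.ofEq _ _ ?_)⟩, h⟩
    rw [LinearMap.ker_comp_of_ker_eq_bot _ e.ker]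

theorem psyz_zero (n : ℕ) (K : ModuleCat.{0} R) [Subsingleton K] : ∀ (M : ModuleCat.{0} R),
    Subsingleton M → PSyz R n K M := by
  induction n with
  | zero => intro M _; exact ⟨LinearEquiv.ofSubsingleton _ _⟩
  | succ n ih =>
    intro M _
    exact ⟨K, K, 0, inferInstance, fun x => ⟨0, Subsingleton.elim _ _⟩,
      ⟨LinearEquiv.ofSubsingleton _ _⟩, ih K inferInstance⟩

/-- A minimal syzygy of a retract is a retract of any syzygy. -/
theorem retract_step {m : ℕ} {P M N : Type} [AddCommGroup M] [Module R M]
    [AddCommGroup N] [Module R N] [AddCommGroup P] [Module R P] [Module.Projective R P]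
    (f : (Fin m → R) →ₗ[R] M) (hf : Function.Surjective f)
    (hmin : LinearMap.ker f ≤ (maximalIdeal R) • (⊤ : Submodule R (Fin m → R)))
    (g : P →ₗ[R] N) (hg : Function.Surjective g)
    (i : M →ₗ[R] N) (p : N →ₗ[R] M) (hpi : ∀ x, p (i x) = x) :
    ∃ (i' : LinearMap.ker f →ₗ[R] LinearMap.ker g) (p' : LinearMap.ker g →ₗ[R] LinearMap.ker f),
      ∀ x, p' (i' x) = x := by
  obtain ⟨φ, hφ⟩ := Module.projective_lifting_property g (i ∘ₗ f) hg
  obtain ⟨ψ, hψ⟩ := Module.projective_lifting_property f (p ∘ₗ g) hf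
  replace hφ : ∀ x, g (φ x) = i (f x) := fun x => LinearMap.congr_fun hφ x
  replace hψ : ∀ x, f (ψ x) = p (g x) := fun x => LinearMap.congr_fun hψ x
  have hfθ : ∀ x, f (ψ (φ x)) = f x := fun x => by rw [hψ, hφ, hpi]
  have hsurj : Function.Surjective (ψ ∘ₗ φ) := by
    rw [← LinearMap.range_eq_top, ← top_le_iff]
    refine Submodule.le_of_le_smul_of_le_jacobson_bot (I := maximalIdeal R) Module.Finite.fg_top
      (maximalIdeal_le_jacobson _) ?_
    intro x _
    have h1 : x - ψ (φ x) ∈ LinearMap.ker f := by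
      rw [LinearMap.mem_ker, map_sub, hfθ, sub_self]
    rw [Submodule.mem_sup]
    exact ⟨ψ (φ x), ⟨x, rfl⟩, _, hmin h1, by abel⟩
  have hbij : Function.Bijective (ψ ∘ₗ φ) :=
    ⟨OrzechProperty.injective_of_surjective_endomorphism _ hsurj, hsurj⟩
  let θ := LinearEquiv.ofBijective (ψ ∘ₗ φ) hbij
  have hθ : ∀ x, θ x = ψ (φ x) := fun x => rfl
  have hfs : ∀ y, f (θ.symm y) = f y := fun y => by
    obtain ⟨x, rfl⟩ := θ.surjective y
    rw [θ.symm_apply_apply, hθ, hfθ]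
  refine ⟨φ.restrict (p := LinearMap.ker f) (q := LinearMap.ker g) ?_,
    (θ.symm.toLinearMap ∘ₗ ψ).restrict (p := LinearMap.ker g) (q := LinearMap.ker f) ?_, ?_⟩
  · intro x hx
    rw [LinearMap.mem_ker] at hx ⊢
    rw [hφ, hx, map_zero]
  · intro x hx
    rw [LinearMap.mem_ker] at hx ⊢
    simp only [LinearMap.comp_apply, LinearEquiv.coe_coe]
    rw [hfs, hψ, hx, map_zero]
  · intro x
    apply Subtype.ext
    change θ.symm (ψ (φ x)) = x
    rw [← hθ, θ.symm_apply_apply]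

theorem retract_syz (n : ℕ) : ∀ (K L M N : ModuleCat.{0} R)
    (_ : IsNthSyzygyOf R n K M) (_ : PSyz R n L N)
    (i : M →ₗ[R] N) (p : N →ₗ[R] M) (_ : ∀ x, p (i x) = x),
    ∃ (i' : K →ₗ[R] L) (p' : L →ₗ[R] K), ∀ x, p' (i' x) = x := by
  induction n with
  | zero =>
    rintro K L M N ⟨a⟩ ⟨b⟩ i p h
    exact ⟨b.symm.toLinearMap ∘ₗ i ∘ₗ a.toLinearMap, a.symm.toLinearMap ∘ₗ p ∘ₗ b.toLinearMap,
      fun x => by simp [h]⟩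
  | succ n ih =>
    rintro K L M N ⟨K', ⟨m, f, hf, hmin, ⟨a⟩⟩, hK⟩ ⟨P, L', g, hP, hg, ⟨b⟩, hL⟩ i p h
    obtain ⟨i', p', h'⟩ := retract_step R f hf hmin g hg i p h
    exact ih K L K' L' hK hL (b.symm.toLinearMap ∘ₗ i' ∘ₗ a.toLinearMap)
      (a.symm.toLinearMap ∘ₗ p' ∘ₗ b.toLinearMap) (fun x => by simp [h'])

/-- A retract is a direct summand. -/
theorem retract_summand {K L : Type} [AddCommGroup K] [Module R K] [AddCommGroup L] [Module R L]
    (i : K →ₗ[R] L) (p : L →ₗ[R] K) (h : ∀ x, p (i x) = x) :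
    Nonempty (L ≃ₗ[R] K × LinearMap.ker p) := by
  have hk : ∀ x, (LinearMap.id - i ∘ₗ p : L →ₗ[R] L) x ∈ LinearMap.ker p := by
    intro x
    simp [h]
  refine ⟨LinearEquiv.ofBijective
    (p.prod ((LinearMap.id - i ∘ₗ p).codRestrict (LinearMap.ker p) hk)) ⟨?_, ?_⟩⟩
  · rw [injective_iff_map_eq_zero]
    intro x hx
    have h1 : p x = 0 := congrArg Prod.fst hx
    have h2 : x - i (p x) = 0 := congrArg Subtype.val (congrArg Prod.snd hx)
    rw [h1, map_zero, sub_zero] at h2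
    exact h2
  · rintro ⟨x, ⟨y, hy⟩⟩
    rw [LinearMap.mem_ker] at hy
    refine ⟨i x + y, Prod.ext ?_ (Subtype.ext ?_)⟩
    · change p (i x + y) = x
      rw [map_add, h, hy, add_zero]
    · change i x + y - i (p (i x + y)) = y
      rw [map_add, h, hy, add_zero, add_sub_cancel_left]

/-- Horseshoe lemma. -/
theorem horseshoe (n : ℕ) : ∀ (A B C LA LC : ModuleCat.{0} R) (f : A →ₗ[R] B) (g : B →ₗ[R] C)
    (_ : Function.Injective f) (_ : Function.Surjective g)
    (_ : LinearMap.range f = LinearMap.ker g) (_ : PSyz R n LA A) (_ : PSyz R n LC C),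
    ∃ (LB : ModuleCat.{0} R) (f' : LA →ₗ[R] LB) (g' : LB →ₗ[R] LC),
      PSyz R n LB B ∧ Function.Injective f' ∧ Function.Surjective g' ∧
      LinearMap.range f' = LinearMap.ker g' := by
  induction n with
  | zero =>
    rintro A B C LA LC f g hf hg hfg ⟨a⟩ ⟨c⟩
    refine ⟨B, f ∘ₗ a.toLinearMap, c.symm.toLinearMap ∘ₗ g, ⟨LinearEquiv.refl R B⟩,
      hf.comp a.injective, c.symm.surjective.comp hg, ?_⟩
    rw [LinearMap.ker_comp_of_ker_eq_bot _ c.symm.ker, ← hfg,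
      LinearMap.range_comp_of_range_eq_top _ a.range]
  | succ n ih =>
    rintro A B C LA LC f g hf hg hfg ⟨P, KA, u, hP, hu, ⟨a⟩, hA⟩ ⟨Q, KC, v, hQ, hv, ⟨c⟩, hC⟩
    obtain ⟨w, hw⟩ := Module.projective_lifting_property g v hg
    replace hw : ∀ x, g (w x) = v x := fun x => LinearMap.congr_fun hw x
    have hgf : ∀ x, g (f x) = 0 := fun x => by
      have : f x ∈ LinearMap.ker g := hfg ▸ LinearMap.mem_range_self f x
      exact this
    have hex : ∀ y, g y = 0 → ∃ x, f x = y := fun y hy => by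
      have : y ∈ LinearMap.range f := hfg ▸ (LinearMap.mem_ker.2 hy)
      exact this
    let t : (P × Q) →ₗ[R] B := (f ∘ₗ u).coprod w
    have ht : ∀ x y, t (x, y) = f (u x) + w y := fun x y => by simp [t]
    have hgt : ∀ z, g (t z) = v z.2 := fun z => by
      rw [ht, map_add, hgf, hw, zero_add]
    have htsurj : Function.Surjective t := by
      intro b
      obtain ⟨y, hy⟩ := hv (g b)
      obtain ⟨x, hx⟩ := hex (b - w y) (by rw [map_sub, hw, hy, sub_self])
      obtain ⟨z, rfl⟩ := hu x
      exact ⟨(z, y), by rw [ht, hx, sub_add_cancel]⟩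
    let f1 : LinearMap.ker u →ₗ[R] LinearMap.ker t :=
      (LinearMap.inl R P Q).restrict (fun x hx => by
        rw [LinearMap.mem_ker] at hx ⊢
        change t (x, 0) = 0
        rw [ht, hx]; simp)
    let g1 : LinearMap.ker t →ₗ[R] LinearMap.ker v :=
      (LinearMap.snd R P Q).restrict (fun x hx => by
        rw [LinearMap.mem_ker] at hx ⊢
        change v x.2 = 0
        rw [← hgt, hx, map_zero])
    have hf1 : Function.Injective f1 := by
      intro x y h
      exact Subtype.ext (congrArg (fun z => z.1.1) h)
    have hg1 : Function.Surjective g1 := by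
      rintro ⟨y, hy⟩
      rw [LinearMap.mem_ker] at hy
      obtain ⟨x, hx⟩ := hex (- w y) (by rw [map_neg, hw, hy, neg_zero])
      obtain ⟨z, rfl⟩ := hu x
      exact ⟨⟨(z, y), by rw [LinearMap.mem_ker, ht, hx, neg_add_cancel]⟩, rfl⟩
    have hfg1 : LinearMap.range f1 = LinearMap.ker g1 := by
      ext ⟨⟨x, y⟩, hz⟩
      constructor
      · rintro ⟨x', hx'⟩
        rw [← hx']
        exact Subtype.ext rfl
      · intro h
        have hy : y = 0 := congrArg Subtype.val (LinearMap.mem_ker.1 h)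
        subst hy
        rw [LinearMap.mem_ker, ht, map_zero, add_zero] at hz
        exact ⟨⟨x, hf (hz.trans (map_zero f).symm)⟩, rfl⟩
    obtain ⟨LB, f', g', hB, h1, h2, h3⟩ := ih KA (ModuleCat.of R (LinearMap.ker t)) KC LA LC
      (f1 ∘ₗ a.toLinearMap) (c.symm.toLinearMap ∘ₗ g1) (hf1.comp a.injective)
      (c.symm.surjective.comp hg1) (by
        rw [LinearMap.ker_comp_of_ker_eq_bot _ c.symm.ker, ← hfg1,
          LinearMap.range_comp_of_range_eq_top _ a.range]) hA hC
    exact ⟨LB, f', g', ⟨ModuleCat.of R (P × Q), _, t,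
      inferInstanceAs (Module.Projective R (P × Q)), htsurj,
      ⟨LinearEquiv.refl R _⟩, hB⟩, h1, h2, h3⟩

theorem exists_psyz_mem
    (n : ℕ) (Kk : ModuleCat.{0} R)
    (hKk : PSyz R n Kk (ModuleCat.of R (ResidueField R)))
    (S : Set (ModuleCat.{0} R))
    (hzero : ModuleCat.of R PUnit ∈ S)
    (hext : ∀ (A B C : ModuleCat.{0} R) (f : A →ₗ[R] B) (g : B →ₗ[R] C),
      Function.Injective f → Function.Surjective g →
      LinearMap.range f = LinearMap.ker g → A ∈ S → C ∈ S → B ∈ S)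
    (hKkS : Kk ∈ S) (M : Type) [AddCommGroup M] [Module R M]
    (hM : IsFiniteLength R M) : ∃ L ∈ S, PSyz R n L (ModuleCat.of R M) := by
  induction hM with
  | @of_subsingleton M _ _ hM =>
    exact ⟨_, hzero, psyz_zero R n (ModuleCat.of R PUnit) (ModuleCat.of R M) hM⟩
  | @of_simple_quotient M _ _ N hs _ ih =>
    obtain ⟨L, hLS, hL⟩ := ih
    obtain ⟨I, hI, ⟨e⟩⟩ := isSimpleModule_iff_quot_maximal.mp hs
    obtain rfl := IsLocalRing.eq_maximalIdeal hI
    have hC : PSyz R n Kk (ModuleCat.of R (M ⧸ N)) :=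
      psyz_congr R n Kk (ModuleCat.of R (ResidueField R)) (ModuleCat.of R (M ⧸ N)) e.symm hKk
    obtain ⟨LB, f', g', hB, h1, h2, h3⟩ := horseshoe R n (ModuleCat.of R N) (ModuleCat.of R M)
      (ModuleCat.of R (M ⧸ N)) L Kk N.subtype N.mkQ N.injective_subtype N.mkQ_surjective
      (by rw [Submodule.range_subtype, Submodule.ker_mkQ]) hL hC
    exact ⟨LB, hext _ _ _ f' g' h1 h2 h3 hLS hKkS, hB⟩

/-- if `M` has finite length then `Ωⁿ M` lies in the extension
closure of `Ωⁿ k`, i.e. it belongs to every subcategory that contains `Ωⁿ k`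
and is closed under isomorphisms, direct summands and extensions. -/
theorem nth_syzygy_of_finite_length_mem_ext_closure_of_nth_syzygy_residue_field
    [IsNoetherianRing R]
    (M : Type) [AddCommGroup M] [Module R M] [Module.Finite R M]
    (hM : IsFiniteLength R M)
    (n : ℕ) (K Kk : ModuleCat.{0} R)
    (hK : IsNthSyzygyOf R n K (ModuleCat.of R M))
    (hKk : IsNthSyzygyOf R n Kk (ModuleCat.of R (ResidueField R)))
    (S : Set (ModuleCat.{0} R))
    (hiso : ∀ A B : ModuleCat.{0} R, A ∈ S → Nonempty (A ≃ₗ[R] B) → B ∈ S)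
    (hsummand : ∀ A B C : ModuleCat.{0} R, A ∈ S →
      Nonempty (A ≃ₗ[R] (↥B × ↥C)) → B ∈ S)
    (hext : ∀ (A B C : ModuleCat.{0} R) (f : A →ₗ[R] B) (g : B →ₗ[R] C),
      Function.Injective f → Function.Surjective g →
      LinearMap.range f = LinearMap.ker g → A ∈ S → C ∈ S → B ∈ S)
    (hKkS : Kk ∈ S) :
    K ∈ S := by
  have hzero : ModuleCat.of R PUnit ∈ S :=
    hsummand Kk (ModuleCat.of R PUnit) Kk hKkS
      ⟨(LinearEquiv.uniqueProd (R := R) (M := Kk) (M₂ := PUnit)).symm⟩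
  obtain ⟨L, hLS, hL⟩ := exists_psyz_mem R n Kk (psyz_of_isNthSyzygyOf R n _ _ hKk) S hzero hext
    hKkS M hM
  obtain ⟨i, p, h⟩ := retract_syz R n K L _ _ hK hL LinearMap.id LinearMap.id (fun _ => rfl)
  exact hsummand L K (ModuleCat.of R (LinearMap.ker p)) hLS (retract_summand R i p h)
end
end

section
/- Let R be a commutative Noetherian local ring and X, M finitely generated R-modules. If M belongs to the extension closure ext(X), then depth M ≥ depth X. If M belongs to the resolving closure res(X), then depth M ≥ min(depth X, depth R). -/
open CategoryTheory IsLocalRing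

noncomputable section

variable (R : Type) [CommRing R] [IsLocalRing R]

/-- The depth of a module over a Noetherian local ring: the supremum of the
lengths of (weakly) regular sequences on `M` contained in the maximal ideal.
With this definition `depth 0 = ∞`. -/
noncomputable def mdepth (M : Type) [AddCommGroup M] [Module R M] : ℕ∞ :=
  ⨆ (rs : List R) (_ : (∀ r ∈ rs, r ∈ maximalIdeal R) ∧
    RingTheory.Sequence.IsWeaklyRegular M rs), (rs.length : ℕ∞)

open CategoryTheory.Abelian in
theorem subsingleton_ext_of_retract_aux (K A B : ModuleCat.{0} R) (f : B →ₗ[R] A) (g : A →ₗ[R] B)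
    (h : g ∘ₗ f = LinearMap.id) (i : ℕ) (hA : Subsingleton (Ext K A i)) :
    Subsingleton (Ext K B i) := by
  refine ⟨fun x y => ?_⟩
  have key : ∀ z : Ext K B i, z = 0 := by
    intro z
    have e : ModuleCat.ofHom f ≫ ModuleCat.ofHom g = 𝟙 B := by
      rw [← ModuleCat.ofHom_comp, h]; rfl
    have h1 : (z.comp (Ext.mk₀ (ModuleCat.ofHom f)) (add_zero i)).comp
        (Ext.mk₀ (ModuleCat.ofHom g)) (add_zero i) = z := by
      rw [Ext.comp_assoc_of_third_deg_zero, Ext.mk₀_comp_mk₀, e, Ext.comp_mk₀_id]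
    rw [← h1, Subsingleton.elim (z.comp (Ext.mk₀ (ModuleCat.ofHom f)) (add_zero i)) 0,
      Ext.zero_comp]
  rw [key x, key y]

open CategoryTheory.Abelian in
theorem subsingleton_ext_of_subsingleton_aux (K B : ModuleCat.{0} R) [Subsingleton B] (i : ℕ) :
    Subsingleton (Ext K B i) := by
  refine ⟨fun x y => ?_⟩
  have key : ∀ z : Ext K B i, z = 0 := by
    intro z
    have e : 𝟙 B = 0 := by
      ext b; exact Subsingleton.elim _ _
    rw [← Ext.comp_mk₀_id z, e, Ext.mk₀_zero, Ext.comp_zero]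
  rw [key x, key y]

theorem shortExact_aux (A B C : ModuleCat.{0} R) (f : A →ₗ[R] B) (g : B →ₗ[R] C)
    (hf : Function.Injective f) (hg : Function.Surjective g)
    (hfg : LinearMap.range f = LinearMap.ker g) :
    ∃ w, (ShortComplex.mk (ModuleCat.ofHom f) (ModuleCat.ofHom g) w).ShortExact := by
  have hex : Function.Exact f g := LinearMap.exact_iff.mpr hfg.symm
  refine ⟨?_, ?_⟩
  · rw [← ModuleCat.ofHom_comp, hex.linearMap_comp_eq_zero]; rfl
  · exact { exact := ModuleCat.shortComplex_exact _ hex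
            mono_f := (ModuleCat.mono_iff_injective _).mpr hf
            epi_g := (ModuleCat.epi_iff_surjective _).mpr hg }

open CategoryTheory.Abelian in
theorem ext_mid_aux (K A B C : ModuleCat.{0} R) (f : A →ₗ[R] B) (g : B →ₗ[R] C)
    (hf : Function.Injective f) (hg : Function.Surjective g)
    (hfg : LinearMap.range f = LinearMap.ker g) (i : ℕ)
    (hA : Subsingleton (Ext K A i)) (hC : Subsingleton (Ext K C i)) :
    Subsingleton (Ext K B i) := by
  obtain ⟨w, hS⟩ := shortExact_aux R A B C f g hf hg hfg
  have key : ∀ z : Ext K B i, z = 0 := by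
    intro z
    obtain ⟨y, rfl⟩ := Ext.covariant_sequence_exact₂ K hS z (hC.elim _ _)
    rw [hA.elim y 0]; apply Ext.zero_comp
  exact ⟨fun x y => by rw [key x, key y]⟩

open CategoryTheory.Abelian in
theorem ext_left_aux (K A B C : ModuleCat.{0} R) (f : A →ₗ[R] B) (g : B →ₗ[R] C)
    (hf : Function.Injective f) (hg : Function.Surjective g)
    (hfg : LinearMap.range f = LinearMap.ker g) (i : ℕ)
    (hB : Subsingleton (Ext K B i)) (hC : ∀ j < i, Subsingleton (Ext K C j)) :
    Subsingleton (Ext K A i) := by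
  obtain ⟨w, hS⟩ := shortExact_aux R A B C f g hf hg hfg
  have key : ∀ z : Ext K A i, z = 0 := by
    intro z
    cases i with
    | zero =>
      have : Mono (ModuleCat.ofHom f) := (ModuleCat.mono_iff_injective _).mpr hf
      exact Ext.postcomp_mk₀_injective_of_mono K (ModuleCat.ofHom f) (hB.elim _ _)
    | succ j =>
      obtain ⟨y, rfl⟩ := Ext.covariant_sequence_exact₁ K hS z (hB.elim _ _) rfl
      rw [(hC j (Nat.lt_succ_self j)).elim y 0]; apply Ext.zero_comp
  exact ⟨fun x y => by rw [key x, key y]⟩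

theorem smul_top_lt_aux [IsNoetherianRing R] (M : ModuleCat.{0} R) [Module.Finite R M]
    [Nontrivial M] : maximalIdeal R • (⊤ : Submodule R M) < ⊤ := by
  refine lt_top_iff_ne_top.mpr fun h => ?_
  exact (top_ne_bot : (⊤ : Submodule R M) ≠ ⊥) (Submodule.eq_bot_of_le_smul_of_le_jacobson_bot
    (maximalIdeal R) ⊤ Module.Finite.fg_top h.ge (IsLocalRing.maximalIdeal_le_jacobson _))

theorem support_aux : Module.support R (ModuleCat.of R (R ⧸ maximalIdeal R)) =
    PrimeSpectrum.zeroLocus (maximalIdeal R) := by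
  change Module.support R (R ⧸ maximalIdeal R) = _
  rw [Module.support_eq_zeroLocus, Ideal.annihilator_quotient]

instance finite_residue_aux : Module.Finite R (ModuleCat.of R (R ⧸ maximalIdeal R)) :=
  inferInstanceAs (Module.Finite R (R ⧸ maximalIdeal R))

open CategoryTheory.Abelian in
theorem le_mdepth_iff_aux [IsNoetherianRing R] (M : ModuleCat.{0} R) [Module.Finite R M]
    (d : ℕ∞) : d ≤ mdepth R M ↔ ∀ i : ℕ, (i : ℕ∞) < d →
      Subsingleton (Ext (ModuleCat.of R (R ⧸ maximalIdeal R)) M i) := by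
  rcases subsingleton_or_nontrivial M with hM | hM
  · refine iff_of_true ?_ (fun i _ => subsingleton_ext_of_subsingleton_aux R _ _ i)
    refine ENat.forall_natCast_le_iff_le.mp fun n _ => ?_
    have hw : RingTheory.Sequence.IsWeaklyRegular M (List.replicate n (0 : R)) := by
      refine ⟨fun i hi x y _ => ?_⟩
      obtain ⟨x, rfl⟩ := Submodule.Quotient.mk_surjective _ x
      obtain ⟨y, rfl⟩ := Submodule.Quotient.mk_surjective _ y
      rw [Subsingleton.elim x y]
    have := le_iSup₂ (f := fun (rs : List R) (_ : (∀ r ∈ rs, r ∈ maximalIdeal R) ∧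
      RingTheory.Sequence.IsWeaklyRegular M rs) => (rs.length : ℕ∞)) (List.replicate n (0 : R))
      ⟨fun r hr => by rw [List.eq_of_mem_replicate hr]; exact zero_mem _, hw⟩
    simpa [mdepth] using this
  constructor
  · intro h i hi
    have hi' := hi.trans_le h
    simp only [mdepth, lt_iSup_iff] at hi'
    obtain ⟨rs, ⟨hm, hw⟩, hl⟩ := hi'
    exact ModuleCat.subsingleton_ext_of_exists_isRegular (maximalIdeal R) _
      (support_aux R).subset M (smul_top_lt_aux R M) rs hm
      (RingTheory.Sequence.IsRegular.of_isWeaklyRegular_of_mem_maximalIdeal M hm hw) i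
      (by exact_mod_cast hl)
  · intro h
    refine ENat.forall_natCast_le_iff_le.mp fun n hn => ?_
    obtain ⟨rs, hl, hm, hr⟩ := ModuleCat.exists_isRegular_of_exists_subsingleton_ext
      (maximalIdeal R) n M (smul_top_lt_aux R M) _ (support_aux R)
      (fun i hi => h i (lt_of_lt_of_le (by exact_mod_cast hi) hn))
    have := le_iSup₂ (f := fun (rs : List R) (_ : (∀ r ∈ rs, r ∈ maximalIdeal R) ∧
      RingTheory.Sequence.IsWeaklyRegular M rs) => (rs.length : ℕ∞)) rs ⟨hm, hr.1⟩
    simpa [mdepth, hl] using this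

open CategoryTheory.Abelian in
/-- The finitely generated modules with vanishing `Ext(k, -)` in degrees below `d`. -/
def deepAux (d : ℕ∞) : Set (ModuleCat.{0} R) :=
  {A | Module.Finite R A ∧ ∀ i : ℕ, (i : ℕ∞) < d →
      Subsingleton (Ext (ModuleCat.of R (R ⧸ maximalIdeal R)) A i)}

theorem deepAux_iso (d : ℕ∞) (A B : ModuleCat.{0} R) (hA : A ∈ deepAux R d)
    (h : Nonempty (A ≃ₗ[R] B)) : B ∈ deepAux R d := by
  obtain ⟨hfin, hA⟩ := hA
  obtain ⟨e⟩ := h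
  exact ⟨Module.Finite.equiv e, fun i hi => subsingleton_ext_of_retract_aux R _ A B
    e.symm.toLinearMap e.toLinearMap (by ext; simp) i (hA i hi)⟩

theorem deepAux_summand (d : ℕ∞) (A B C : ModuleCat.{0} R) (hA : A ∈ deepAux R d)
    (h : Nonempty (A ≃ₗ[R] (B × C))) : B ∈ deepAux R d := by
  obtain ⟨hfin, hA⟩ := hA
  obtain ⟨e⟩ := h
  refine ⟨Module.Finite.of_surjective (LinearMap.fst R B C ∘ₗ e.toLinearMap)
    (Prod.fst_surjective.comp e.surjective), fun i hi => subsingleton_ext_of_retract_aux R _ A B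
    (e.symm.toLinearMap ∘ₗ LinearMap.inl R B C) (LinearMap.fst R B C ∘ₗ e.toLinearMap)
    (by ext; simp) i (hA i hi)⟩

theorem deepAux_ext [IsNoetherianRing R] (d : ℕ∞)
    (A B C : ModuleCat.{0} R) (f : A →ₗ[R] B) (g : B →ₗ[R] C)
    (hf : Function.Injective f) (hg : Function.Surjective g)
    (hfg : LinearMap.range f = LinearMap.ker g) (hA : A ∈ deepAux R d) (hC : C ∈ deepAux R d) :
    B ∈ deepAux R d := by
  obtain ⟨hfA, hA⟩ := hA
  obtain ⟨hfC, hC⟩ := hC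
  have : IsNoetherian R B := isNoetherian_of_range_eq_ker f g hfg
  exact ⟨inferInstance, fun i hi => ext_mid_aux R _ A B C f g hf hg hfg i (hA i hi) (hC i hi)⟩

theorem deepAux_ker [IsNoetherianRing R] (d : ℕ∞)
    (A B C : ModuleCat.{0} R) (f : A →ₗ[R] B) (g : B →ₗ[R] C)
    (hf : Function.Injective f) (hg : Function.Surjective g)
    (hfg : LinearMap.range f = LinearMap.ker g) (hB : B ∈ deepAux R d) (hC : C ∈ deepAux R d) :
    A ∈ deepAux R d := by
  obtain ⟨hfB, hB⟩ := hB
  obtain ⟨hfC, hC⟩ := hC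
  exact ⟨Module.Finite.of_injective f hf, fun i hi => ext_left_aux R _ A B C f g hf hg hfg i
    (hB i hi) fun j hj => hC j (lt_trans (by exact_mod_cast hj) hi)⟩

/-- if `M` belongs to the extension closure of `X` then
`depth M ≥ depth X`; if `M` belongs to the resolving closure of `X` then
`depth M ≥ min (depth X) (depth R)`. -/
theorem depth_of_mem_ext_closure_and_res_closure
    [IsNoetherianRing R]
    (X M : ModuleCat.{0} R) [Module.Finite R ↥X] [Module.Finite R ↥M] :
    ((∀ S : Set (ModuleCat.{0} R),
      (∀ A B : ModuleCat.{0} R, A ∈ S → Nonempty (A ≃ₗ[R] B) → B ∈ S) →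
      (∀ A B C : ModuleCat.{0} R, A ∈ S → Nonempty (A ≃ₗ[R] (↥B × ↥C)) → B ∈ S) →
      (∀ (A B C : ModuleCat.{0} R) (f : A →ₗ[R] B) (g : B →ₗ[R] C),
        Function.Injective f → Function.Surjective g →
        LinearMap.range f = LinearMap.ker g → A ∈ S → C ∈ S → B ∈ S) →
      X ∈ S → M ∈ S) →
      mdepth R ↥X ≤ mdepth R ↥M) ∧
    ((∀ S : Set (ModuleCat.{0} R),
      (∀ A B : ModuleCat.{0} R, A ∈ S → Nonempty (A ≃ₗ[R] B) → B ∈ S) →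
      (∀ A B C : ModuleCat.{0} R, A ∈ S → Nonempty (A ≃ₗ[R] (↥B × ↥C)) → B ∈ S) →
      (∀ (A B C : ModuleCat.{0} R) (f : A →ₗ[R] B) (g : B →ₗ[R] C),
        Function.Injective f → Function.Surjective g →
        LinearMap.range f = LinearMap.ker g → A ∈ S → C ∈ S → B ∈ S) →
      (∀ (A B C : ModuleCat.{0} R) (f : A →ₗ[R] B) (g : B →ₗ[R] C),
        Function.Injective f → Function.Surjective g →
        LinearMap.range f = LinearMap.ker g → B ∈ S → C ∈ S → A ∈ S) →
      ModuleCat.of R R ∈ S → X ∈ S → M ∈ S) →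
      min (mdepth R ↥X) (mdepth R R) ≤ mdepth R ↥M) := by
  refine ⟨fun h => ?_, fun h => ?_⟩
  · exact (le_mdepth_iff_aux R M _).mpr (h (deepAux R (mdepth R X)) (deepAux_iso R _)
      (deepAux_summand R _) (deepAux_ext R _)
      ⟨inferInstance, (le_mdepth_iff_aux R X _).mp le_rfl⟩).2
  · exact (le_mdepth_iff_aux R M _).mpr (h (deepAux R (min (mdepth R X) (mdepth R R)))
      (deepAux_iso R _) (deepAux_summand R _) (deepAux_ext R _) (deepAux_ker R _)
      ⟨inferInstanceAs (Module.Finite R R),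
        haveI : Module.Finite R (ModuleCat.of R R) := inferInstanceAs (Module.Finite R R)
        (le_mdepth_iff_aux R (ModuleCat.of R R) _).mp (min_le_right _ _)⟩
      ⟨inferInstance, (le_mdepth_iff_aux R X _).mp (min_le_left _ _)⟩).2
end
end

section
/- Let R be a commutative Noetherian local ring and X a finitely generated R-module. Then the nonfree locus of X equals the support of Ext^1_R(X, ΩX), where ΩX is the first syzygy of X in a minimal free resolution. In particular, the nonfree locus of X is a Zariski-closed subset of Spec R. -/
open CategoryTheory IsLocalRing

noncomputable section

variable (R : Type) [CommRing R] [IsLocalRing R]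

/-- The nonfree locus of a module: the set of primes `p` such that `M_p` is
not a free `R_p`-module. -/
def nonfreeLocus (M : Type) [AddCommGroup M] [Module R M] :
    Set (PrimeSpectrum R) :=
  { p | ¬ Module.Free (Localization.AtPrime p.asIdeal)
      (LocalizedModule p.asIdeal.primeCompl M) }

theorem freeAt_iff {R : Type} [CommRing R] {X F : Type} [AddCommGroup X] [Module R X]
    [AddCommGroup F] [Module R F] [Module.Finite R F] [Module.Free R F]
    [Module.FinitePresentation R X] (f : F →ₗ[R] X) (hf : Function.Surjective f)
    (p : PrimeSpectrum R) :
    Module.Free (Localization.AtPrime p.asIdeal) (LocalizedModule p.asIdeal.primeCompl X) ↔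
      ∃ r : R, r ∉ p.asIdeal ∧ ∃ s : X →ₗ[R] F, ∀ x, f (s x) = r • x := by
  constructor
  · intro hfree
    obtain ⟨σ, hσ⟩ := Module.projective_lifting_property
      (LocalizedModule.map p.asIdeal.primeCompl f) LinearMap.id
      (LocalizedModule.map_surjective _ f hf)
    obtain ⟨h, s, hs⟩ := Module.FinitePresentation.exists_lift_of_isLocalizedModule
      p.asIdeal.primeCompl (LocalizedModule.mkLinearMap p.asIdeal.primeCompl F)
      ((σ.restrictScalars R) ∘ₗ LocalizedModule.mkLinearMap p.asIdeal.primeCompl X)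
    have H : (LocalizedModule.mkLinearMap p.asIdeal.primeCompl X) ∘ₗ (f ∘ₗ h) =
        (LocalizedModule.mkLinearMap p.asIdeal.primeCompl X) ∘ₗ (s.1 • LinearMap.id) := by
      ext x
      have h1 : LocalizedModule.mkLinearMap p.asIdeal.primeCompl F (h x) =
          s.1 • σ (LocalizedModule.mkLinearMap p.asIdeal.primeCompl X x) :=
        LinearMap.congr_fun hs x
      have h2 := congrArg (LocalizedModule.map p.asIdeal.primeCompl f) h1
      have h3 := LinearMap.congr_fun hσ (LocalizedModule.mkLinearMap p.asIdeal.primeCompl X x)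
      have h4 : LocalizedModule.map p.asIdeal.primeCompl f
          (LocalizedModule.mkLinearMap p.asIdeal.primeCompl F (h x)) =
          LocalizedModule.mkLinearMap p.asIdeal.primeCompl X (f (h x)) := by
        simp [LocalizedModule.map_mk]
      rw [h4, LinearMap.map_smul_of_tower] at h2
      rw [LinearMap.comp_apply, LinearMap.id_apply] at h3
      rw [h3] at h2
      simpa using h2
    obtain ⟨t, ht⟩ := Module.Finite.exists_smul_of_comp_eq_of_isLocalizedModule
      p.asIdeal.primeCompl _ _ _ H
    refine ⟨t.1 * s.1, (t * s).2, t.1 • h, fun x => ?_⟩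
    have := LinearMap.congr_fun ht x
    simpa [mul_smul, Submonoid.smul_def] using this
  · rintro ⟨r, hr, s, hs⟩
    have hu : IsUnit (algebraMap R (Localization.AtPrime p.asIdeal) r) :=
      IsLocalization.map_units (M := p.asIdeal.primeCompl) _ ⟨r, hr⟩
    have hc : LocalizedModule.map p.asIdeal.primeCompl f ∘ₗ
        ((hu.unit⁻¹).1 • LocalizedModule.map p.asIdeal.primeCompl s) = LinearMap.id := by
      ext x
      induction x using LocalizedModule.induction_on with
      | h m t =>
        rw [LinearMap.comp_apply, LinearMap.smul_apply, map_smul, LocalizedModule.map_mk,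
          LocalizedModule.map_mk, hs, ← LocalizedModule.smul'_mk, ← algebraMap_smul
          (Localization.AtPrime p.asIdeal) r, ← mul_smul]
        simp
    have : Module.Projective (Localization.AtPrime p.asIdeal)
        (LocalizedModule p.asIdeal.primeCompl X) := Module.Projective.of_split _ _ hc
    exact Module.free_of_flat_of_isLocalRing

theorem notMem_support_homology {R : Type} [CommRing R] (S : ShortComplex (ModuleCat.{0} R))
    (p : PrimeSpectrum R) :
    p ∉ Module.support R S.homology ↔
      ∀ x : S.X₂, S.g x = 0 → ∃ r : R, r ∉ p.asIdeal ∧ ∃ y : S.X₁, S.f y = r • x := by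
  have e : S.homology ≃ₗ[R] (LinearMap.ker S.g.hom ⧸ LinearMap.range S.moduleCatToCycles) :=
    S.moduleCatHomologyIso.toLinearEquiv
  rw [LinearEquiv.support_eq e, Module.notMem_support_iff']
  constructor
  · intro h x hx
    obtain ⟨r, hr, h⟩ := h (Submodule.mkQ _ (⟨x, hx⟩ : LinearMap.ker S.g.hom))
    refine ⟨r, hr, ?_⟩
    rw [← map_smul] at h
    obtain ⟨y, hy⟩ := (Submodule.Quotient.mk_eq_zero _).1 h
    exact ⟨y, congrArg Subtype.val hy⟩
  · intro h m
    obtain ⟨⟨x, hx⟩, rfl⟩ := Submodule.mkQ_surjective _ m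
    obtain ⟨r, hr, y, hy⟩ := h x hx
    refine ⟨r, hr, ?_⟩
    rw [← map_smul]
    exact (Submodule.Quotient.mk_eq_zero _).2 ⟨y, Subtype.ext hy⟩

theorem notMem_support_ext {R : Type} [CommRing R] {X : ModuleCat.{0} R}
    (P : ProjectiveResolution X) (Y : ModuleCat.{0} R)
    (p : PrimeSpectrum R) :
    p ∉ Module.support R (((Ext R (ModuleCat.{0} R) 1).obj (Opposite.op X)).obj Y) ↔
      ∀ c : P.complex.X 1 ⟶ Y, P.complex.d 2 1 ≫ c = 0 →
        ∃ r : R, r ∉ p.asIdeal ∧ ∃ u : P.complex.X 0 ⟶ Y, P.complex.d 1 0 ≫ u = r • c := by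
  rw [LinearEquiv.support_eq (P.isoExt 1 Y ≪≫ HomologicalComplex.homologyIsoSc' _ 0 1 2
    (by simp) (by simp)).toLinearEquiv, notMem_support_homology]
  rfl


/-- Annihilating `Ext¹` locally at `p` amounts to splitting `f` up to a scalar outside `p`. -/
theorem notMem_support_ext_iff_split {R : Type} [CommRing R] {X F K : ModuleCat.{0} R}
    [Projective F] (f : F ⟶ X) (hf : Function.Surjective f) (i : K ⟶ F) (hi : Function.Injective i)
    (hif : Function.Exact i f) (p : PrimeSpectrum R) :
    p ∉ Module.support R (((Ext R (ModuleCat.{0} R) 1).obj (Opposite.op X)).obj K) ↔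
      ∃ r : R, r ∉ p.asIdeal ∧ ∃ s : X ⟶ F, s ≫ f = r • 𝟙 X := by
  let P : ProjectiveResolution X := projectiveResolution X
  let π : P.complex.X 0 ⟶ X := P.π.f 0
  have hdπ : P.complex.d 1 0 ≫ π = 0 := P.complex_d_comp_π_f_zero
  have : Epi f := (ModuleCat.epi_iff_surjective f).2 hf
  have hπ : Epi π := inferInstanceAs (Epi (P.π.f 0))
  have : Mono i := (ModuleCat.mono_iff_injective i).2 hi
  have w : i ≫ f = 0 := by ext x; exact hif.apply_apply_eq_zero x
  have hS : (ShortComplex.mk i f w).Exact := by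
    rw [ShortComplex.ShortExact.moduleCat_exact_iff_function_exact]; exact hif
  have hE : (ShortComplex.mk (P.complex.d 1 0) π hdπ).Exact := P.exact₀
  rw [notMem_support_ext P]
  constructor
  · intro h
    let φ : P.complex.X 0 ⟶ F := Projective.factorThru π f
    have hφ : φ ≫ f = π := Projective.factorThru_comp _ _
    let c : P.complex.X 1 ⟶ K := hS.lift (P.complex.d 1 0 ≫ φ) (by
      dsimp; rw [Category.assoc, hφ, hdπ])
    have hc : c ≫ i = P.complex.d 1 0 ≫ φ := hS.lift_f _ _
    obtain ⟨r, hr, u, hu⟩ := h c (by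
      rw [← cancel_mono i, Category.assoc, hc, ← Category.assoc]
      simp)
    have hz : P.complex.d 1 0 ≫ (r • φ - u ≫ i) = 0 := by
      rw [Preadditive.comp_sub, ← Category.assoc, hu, Linear.smul_comp, hc, Linear.comp_smul,
        sub_self]
    refine ⟨r, hr, hE.desc (r • φ - u ≫ i) hz, ?_⟩
    have hd : π ≫ hE.desc (r • φ - u ≫ i) hz = r • φ - u ≫ i := hE.g_desc _ _
    rw [← cancel_epi π, ← Category.assoc, hd, Preadditive.sub_comp, Category.assoc, w,
      Linear.smul_comp, hφ]
    simp
  · rintro ⟨r, hr, s, hs⟩ c hc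
    let σ : F ⟶ P.complex.X 0 := Projective.factorThru f π
    have hσ : σ ≫ π = f := Projective.factorThru_comp _ _
    have h0 : (r • 𝟙 _ - π ≫ s ≫ σ) ≫ π = 0 := by
      rw [Preadditive.sub_comp, Category.assoc, Category.assoc, hσ, hs]
      simp
    let h : P.complex.X 0 ⟶ P.complex.X 1 := hE.liftFromProjective (r • 𝟙 _ - π ≫ s ≫ σ) h0
    have hh : h ≫ P.complex.d 1 0 = r • 𝟙 _ - π ≫ s ≫ σ := hE.liftFromProjective_comp _ _
    have h1 : (P.complex.d 1 0 ≫ h - r • 𝟙 _) ≫ P.complex.d 1 0 = 0 := by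
      rw [Preadditive.sub_comp, Category.assoc, hh, Preadditive.comp_sub, ← Category.assoc _ π,
        hdπ]
      simp
    let k := (P.exact_succ 0).liftFromProjective _ h1
    have hk : k ≫ P.complex.d 2 1 = _ := (P.exact_succ 0).liftFromProjective_comp _ h1
    refine ⟨r, hr, h ≫ c, ?_⟩
    have := congrArg (· ≫ c) hk
    dsimp only at this
    rw [Category.assoc, hc, Preadditive.sub_comp, Limits.comp_zero] at this
    rw [← Category.assoc, ← sub_eq_zero, this]
    simp

/-- the nonfree locus of `X` equals the support of
`Ext¹(X, ΩX)`; in particular it is Zariski-closed. -/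
theorem nonfreeLocus_eq_support_ext_and_isClosed
    [IsNoetherianRing R]
    (X : Type) [AddCommGroup X] [Module R X] [Module.Finite R X]
    (ΩX : ModuleCat.{0} R) (hΩ : IsSyzygyOf R ΩX (ModuleCat.of R X)) :
    nonfreeLocus R X =
      Module.support R
        ↥(((Ext R (ModuleCat.{0} R) 1).obj
            (Opposite.op (ModuleCat.of R X))).obj ΩX) ∧
    IsClosed (nonfreeLocus R X) := by
  have hfp : Module.FinitePresentation R X := Module.finitePresentation_of_finite R X
  have hloc : nonfreeLocus R X = (Module.freeLocus R X)ᶜ := rfl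
  refine ⟨?_, ?_⟩
  · obtain ⟨n, f, hf, -, ⟨e⟩⟩ := hΩ
    ext p
    rw [← not_iff_not]
    have h1 := freeAt_iff (X := X) f hf p
    have : Projective (ModuleCat.of R (Fin n → R)) :=
      ModuleCat.projective_of_free (Pi.basisFun R (Fin n))
    have h2 := notMem_support_ext_iff_split (X := ModuleCat.of R X)
      (F := ModuleCat.of R (Fin n → R)) (K := ΩX) (ModuleCat.ofHom f) hf
      (ModuleCat.ofHom ((LinearMap.ker f).subtype ∘ₗ e.toLinearMap))
      (Subtype.val_injective.comp e.injective) (by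
        intro y
        constructor
        · intro hy
          exact ⟨e.symm ⟨y, hy⟩, by simp⟩
        · rintro ⟨x, rfl⟩
          exact (e x).2) p
    rw [h2]
    refine (not_not.trans h1).trans ?_
    refine exists_congr fun r => and_congr_right fun _ => ?_
    constructor
    · rintro ⟨s, hs⟩
      exact ⟨ModuleCat.ofHom s, by ext x; exact hs x⟩
    · rintro ⟨s, hs⟩
      exact ⟨s.hom, fun x => LinearMap.congr_fun (congrArg ModuleCat.Hom.hom hs) x⟩
  · rw [hloc, isClosed_compl_iff]
    exact Module.isOpen_freeLocus
end
end
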